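/- arXiv:1902.07937 — 10 statements merged into one kernel-verified Lean document; each statement's English description precedes it below -/
import Mathlib

section
/- Every social Schelling game whose topology is a star graph admits at least one equilibrium assignment; in fact, every assignment in which the center of the star is occupied by some agent is an equilibrium. -/
/-- A (social) Schelling game: agents `A`, of which `strategic` are the strategic
ones (the rest being stubborn), a social network `net` on the agents (the friends
of an agent are her neighbors in `net`, all other agents are her enemies), a
topology `top` on the set of locations `V`, and the preferred locations `loc`
of the (stubborn) agents. -/
structure SchellingGame (A V : Type) where
  strategic : Finset A
  net : SimpleGraph A
  top : SimpleGraph V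
  loc : A → V

namespace SchellingGame

variable {A V : Type} [Fintype A] [DecidableEq A] [Fintype V] [DecidableEq V]

/-- There are `n ≥ 2` agents, strictly more locations than agents, and the
stubborn agents have pairwise distinct preferred locations. -/
def WellFormed (g : SchellingGame A V) : Prop :=
  2 ≤ Fintype.card A ∧ Fintype.card A < Fintype.card V ∧
    Set.InjOn g.loc ↑(g.strategicᶜ)

/-- An assignment is an injective placement of the agents on the nodes of the
topology which places every stubborn agent at her preferred location. -/
def IsAssignment (g : SchellingGame A V) (v : A → V) : Prop :=
  Function.Injective v ∧ ∀ i ∉ g.strategic, v i = g.loc i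

/-- The number of friends of `i` occupying nodes adjacent to `v i`. -/
noncomputable def fcount (g : SchellingGame A V) (v : A → V) (i : A) : ℕ :=
  Nat.card {j : A // g.net.Adj i j ∧ g.top.Adj (v i) (v j)}

/-- The number of enemies of `i` occupying nodes adjacent to `v i`. -/
noncomputable def ecount (g : SchellingGame A V) (v : A → V) (i : A) : ℕ :=
  Nat.card {j : A // j ≠ i ∧ ¬ g.net.Adj i j ∧ g.top.Adj (v i) (v j)}

/-- The utility of agent `i` under assignment `v`: `0` if `i` has no adjacent
friends, and otherwise the fraction of friends among her occupied neighbors. -/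
noncomputable def util (g : SchellingGame A V) (v : A → V) (i : A) : ℚ :=
  if g.fcount v i = 0 then 0
  else (g.fcount v i : ℚ) / ((g.fcount v i : ℚ) + (g.ecount v i : ℚ))

/-- An assignment is an equilibrium if no strategic agent can strictly increase
her utility by relocating to an unoccupied node. -/
def IsEquilibrium (g : SchellingGame A V) (v : A → V) : Prop :=
  g.IsAssignment v ∧ ∀ i ∈ g.strategic, ∀ z : V, (∀ j : A, v j ≠ z) →
    g.util (Function.update v i z) i ≤ g.util v i

/-- The social welfare: the total utility of the strategic agents. -/
noncomputable def SW (g : SchellingGame A V) (v : A → V) : ℚ :=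
  ∑ i ∈ g.strategic, g.util v i

/-- `g` is a `k`-typed Schelling game with type map `typ`: two distinct agents are
friends iff they have the same type, and every type is nonempty. -/
def IsTypedGame (g : SchellingGame A V) (k : ℕ) (typ : A → Fin k) : Prop :=
  (∀ i j : A, g.net.Adj i j ↔ (i ≠ j ∧ typ i = typ j)) ∧ ∀ c : Fin k, ∃ i : A, typ i = c

end SchellingGame

/-- A star graph: one center node adjacent to all other nodes, and no other edges. -/
def IsStar {V : Type} (G : SimpleGraph V) : Prop :=
  ∃ c : V, ∀ a b : V, G.Adj a b ↔ (a ≠ b ∧ (a = c ∨ b = c))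

theorem exists_inj_extend {A V : Type} [Fintype A] [DecidableEq A] [Fintype V] [DecidableEq V]
    (h : Fintype.card A < Fintype.card V) (s : Finset A) (f : A → V) (hf : Set.InjOn f s) :
    ∃ v : A → V, Function.Injective v ∧ ∀ i ∈ s, v i = f i := by
  obtain ⟨t, h1, -, h3⟩ := Finset.exists_subsuperset_card_eq (n := Fintype.card A)
    (Finset.subset_univ (s.image f)) (Finset.card_image_le.trans (Finset.card_le_univ s))
    (by simpa using h.le)
  obtain ⟨e, he⟩ := Finset.exists_equiv_extend_of_card_eq h3.symm h1 hf
  exact ⟨fun i => (e i : V), Subtype.val_injective.comp e.injective, he⟩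

theorem SchellingGame.util_nonneg' {A V : Type} [Fintype A] [DecidableEq A]
    [Fintype V] [DecidableEq V] (g : SchellingGame A V) (v : A → V) (i : A) :
    0 ≤ g.util v i := by
  unfold SchellingGame.util
  split_ifs
  · exact le_rfl
  · positivity

/-- Every social Schelling game whose topology is a star graph admits at
least one equilibrium assignment; in fact, every assignment in which the center of the
star is occupied by some agent is an equilibrium. -/
theorem stmt0 (A V : Type) [Fintype A] [DecidableEq A] [Fintype V] [DecidableEq V]
    (g : SchellingGame A V) (hwf : g.WellFormed) (c : V)
    (hstar : ∀ a b : V, g.top.Adj a b ↔ (a ≠ b ∧ (a = c ∨ b = c))) :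
    (∀ v : A → V, g.IsAssignment v → (∃ i : A, v i = c) → g.IsEquilibrium v) ∧
      (∃ v : A → V, g.IsEquilibrium v) := by
  have key : ∀ v : A → V, g.IsAssignment v → (∃ i : A, v i = c) → g.IsEquilibrium v := by
    rintro v hv ⟨k, hk⟩
    refine ⟨hv, fun i _ z hz => ?_⟩
    have hzc : z ≠ c := fun h => hz k (hk.trans h.symm)
    by_cases hi : v i = c
    · have h0 : g.fcount (Function.update v i z) i = 0 := by
        unfold SchellingGame.fcount
        rw [Nat.card_eq_zero]
        left
        refine ⟨?_⟩
        rintro ⟨j, hj, hj2⟩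
        have hji : j ≠ i := hj.ne'
        rw [hstar] at hj2
        simp only [Function.update_self, Function.update_of_ne hji] at hj2
        rcases hj2.2 with h | h
        · exact hzc h
        · exact hji (hv.1 (h.trans hi.symm))
      have : g.util (Function.update v i z) i = 0 := by
        unfold SchellingGame.util
        rw [if_pos h0]
      rw [this]
      exact g.util_nonneg' v i
    · have hadj : ∀ j, g.top.Adj (Function.update v i z i) (Function.update v i z j) ↔
          g.top.Adj (v i) (v j) := by
        intro j
        by_cases hji : j = i
        · subst hji; simp
        · rw [hstar, hstar]
          simp only [Function.update_self, Function.update_of_ne hji]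
          have := hz j
          have h2 : v i ≠ v j := fun h => hji (hv.1 h).symm
          have h3 : z ≠ v j := this.symm
          simp [h2, h3, hi, hzc]
      apply le_of_eq
      unfold SchellingGame.util SchellingGame.fcount SchellingGame.ecount
      simp only [hadj]
  refine ⟨key, ?_⟩
  obtain ⟨-, hcard, hinj⟩ := hwf
  by_cases hS : ∃ i ∉ g.strategic, g.loc i = c
  · obtain ⟨k, hk, hkc⟩ := hS
    obtain ⟨v, hv, hvf⟩ := exists_inj_extend hcard g.strategicᶜ g.loc hinj
    have hvf' : ∀ i ∉ g.strategic, v i = g.loc i := fun i hi => hvf i (by simpa using hi)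
    exact ⟨v, key v ⟨hv, hvf'⟩ ⟨k, (hvf' k hk).trans hkc⟩⟩
  · push Not at hS
    by_cases hR : ∃ s, s ∈ g.strategic
    · obtain ⟨s, hs⟩ := hR
      obtain ⟨v, hv, hvf⟩ := exists_inj_extend hcard (insert s g.strategicᶜ)
        (Function.update g.loc s c) (by
          intro a ha b hb hab
          simp only [Finset.coe_insert, Set.mem_insert_iff, Finset.mem_coe,
            Finset.mem_compl] at ha hb
          by_cases has : a = s <;> by_cases hbs : b = s
          · rw [has, hbs]
          · subst has
            rw [Function.update_self, Function.update_of_ne hbs] at hab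
            exact absurd hab.symm (hS b (hb.resolve_left hbs))
          · subst hbs
            rw [Function.update_self, Function.update_of_ne has] at hab
            exact absurd hab (hS a (ha.resolve_left has))
          · rw [Function.update_of_ne has, Function.update_of_ne hbs] at hab
            exact hinj (by simpa using ha.resolve_left has)
              (by simpa using hb.resolve_left hbs) hab)
      refine ⟨v, key v ⟨hv, fun i hi => ?_⟩ ⟨s, ?_⟩⟩
      · have his : i ≠ s := fun h => hi (h ▸ hs)
        rw [hvf i (by simp [hi]), Function.update_of_ne his]
      · rw [hvf s (by simp), Function.update_self]
    · push Not at hR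
      refine ⟨g.loc, ⟨fun a b hab => ?_, fun _ _ => rfl⟩, fun i hi => absurd hi (hR i)⟩
      exact hinj (by simpa using hR a) (by simpa using hR b) hab
end

section
/- Every social Schelling game whose topology is a graph of maximum degree 2 admits at least one equilibrium assignment. -/
namespace SchellingGame

open Classical in
/-- weight of an ordered pair of agents -/
noncomputable def wgt {A V : Type} (g : SchellingGame A V) (v : A → V) (i j : A) : ℤ :=
  if g.top.Adj (v i) (v j) then (if g.net.Adj i j then 2 else -1) else 0

theorem wgt_symm {A V : Type} (g : SchellingGame A V) (v : A → V) (i j : A) :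
    g.wgt v i j = g.wgt v j i := by
  classical
  unfold wgt
  rw [if_congr (g.top.adj_comm (v i) (v j)) (if_congr (g.net.adj_comm i j) rfl rfl) rfl]

theorem wgt_self {A V : Type} (g : SchellingGame A V) (v : A → V) (i : A) :
    g.wgt v i i = 0 := by
  unfold wgt; simp

theorem wgt_sum {A V : Type} [Fintype A] (g : SchellingGame A V) (v : A → V) (i : A) :
    ∑ j, g.wgt v i j = 2 * (g.fcount v i : ℤ) - (g.ecount v i : ℤ) := by
  classical
  unfold fcount ecount
  rw [Nat.card_eq_fintype_card, Nat.card_eq_fintype_card, Fintype.card_subtype,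
    Fintype.card_subtype, Finset.card_filter, Finset.card_filter]
  push_cast
  rw [Finset.mul_sum, ← Finset.sum_sub_distrib]
  apply Finset.sum_congr rfl
  intro j _
  classical
  unfold wgt
  by_cases h1 : g.top.Adj (v i) (v j) <;> by_cases h2 : g.net.Adj i j <;>
    by_cases h3 : j = i <;> simp_all

theorem count_le {A V : Type} [Fintype A] [Fintype V] (g : SchellingGame A V) (v : A → V)
    (hv : Function.Injective v)
    (hdeg : ∀ a : V, Nat.card {b : V // g.top.Adj a b} ≤ 2) (i : A) :
    g.fcount v i + g.ecount v i ≤ 2 := by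
  classical
  refine le_trans ?_ (hdeg (v i))
  unfold fcount ecount
  rw [← Nat.card_sum]
  refine Nat.card_le_card_of_injective
    (Sum.elim (fun j => ⟨v j.1, j.2.2⟩) (fun j => ⟨v j.1, j.2.2.2⟩)) ?_
  rintro (⟨a, ha⟩ | ⟨a, ha⟩) (⟨b, hb⟩ | ⟨b, hb⟩) h <;>
    simp only [Sum.elim_inl, Sum.elim_inr, Subtype.mk.injEq] at h <;>
    obtain rfl := hv h <;> tauto

theorem val_lt (f e f' e' : ℕ) (h : f + e ≤ 2) (h' : f' + e' ≤ 2)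
    (hlt : (if f = 0 then (0 : ℚ) else (f : ℚ) / ((f : ℚ) + (e : ℚ))) <
      (if f' = 0 then (0 : ℚ) else (f' : ℚ) / ((f' : ℚ) + (e' : ℚ)))) :
    2 * (f : ℤ) - e < 2 * (f' : ℤ) - e' := by
  have hf : f ≤ 2 := by omega
  have he : e ≤ 2 := by omega
  have hf' : f' ≤ 2 := by omega
  have he' : e' ≤ 2 := by omega
  interval_cases f <;> interval_cases e <;> try omega
  all_goals
    interval_cases f' <;> interval_cases e' <;> first | omega | (exfalso; revert hlt; norm_num)

theorem pot_split {A : Type} [Fintype A] [DecidableEq A] (W : A → A → ℤ)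
    (hs : ∀ a b, W a b = W b a) (i : A) (h0 : W i i = 0) :
    ∑ a, ∑ b, W a b = 2 * ∑ j, W i j +
      ∑ a ∈ Finset.univ.erase i, ∑ b ∈ Finset.univ.erase i, W a b := by
  have key : ∀ F : A → ℤ, ∑ a, F a = F i + ∑ a ∈ Finset.univ.erase i, F a := fun F =>
    (Finset.add_sum_erase _ F (Finset.mem_univ i)).symm
  rw [key (fun a => ∑ b, W a b)]
  have : ∑ a ∈ Finset.univ.erase i, ∑ b, W a b = ∑ a ∈ Finset.univ.erase i, W a i +
      ∑ a ∈ Finset.univ.erase i, ∑ b ∈ Finset.univ.erase i, W a b := by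
    rw [← Finset.sum_add_distrib]
    exact Finset.sum_congr rfl fun a _ => key (W a)
  rw [this, Finset.sum_congr rfl (fun a _ => hs a i), key (W i), h0]
  ring

theorem exists_assignment {A V : Type} [Fintype A] [DecidableEq A] [Fintype V] [DecidableEq V]
    (g : SchellingGame A V) (hwf : g.WellFormed) : ∃ v, g.IsAssignment v := by
  obtain ⟨_, hc, hinj⟩ := hwf
  have h1 : (g.strategicᶜ.image g.loc).card ≤ Fintype.card A :=
    Finset.card_image_le.trans (Finset.card_le_univ _)
  obtain ⟨t, ht, -, htc⟩ := Finset.exists_subsuperset_card_eq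
    (Finset.subset_univ (g.strategicᶜ.image g.loc)) h1 (by rw [Finset.card_univ]; omega)
  obtain ⟨e, he⟩ := Finset.exists_equiv_extend_of_card_eq htc.symm ht hinj
  exact ⟨fun a => (e a : V), fun a b h => e.injective (Subtype.ext h),
    fun i hi => he i (by simpa using hi)⟩

end SchellingGame

/-- Every social Schelling game whose topology is a graph of maximum
degree 2 admits at least one equilibrium assignment. -/
theorem stmt1 (A V : Type) [Fintype A] [DecidableEq A] [Fintype V] [DecidableEq V]
    (g : SchellingGame A V) (hwf : g.WellFormed)
    (hdeg : ∀ a : V, Nat.card {b : V // g.top.Adj a b} ≤ 2) :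
    ∃ v : A → V, g.IsEquilibrium v := by
  classical
  obtain ⟨v, hv, hmax⟩ := Set.exists_max_image {v | g.IsAssignment v}
    (fun v => ∑ a, ∑ b, g.wgt v a b) (Set.toFinite _) (g.exists_assignment hwf)
  refine ⟨v, hv, fun i hi z hz => ?_⟩
  by_contra hlt
  rw [not_le] at hlt
  have hv' : g.IsAssignment (Function.update v i z) := by
    refine ⟨fun a b h => ?_, fun j hj => ?_⟩
    · by_cases ha : a = i <;> by_cases hb : b = i
      · rw [ha, hb]
      · subst ha
        rw [Function.update_self, Function.update_of_ne hb] at h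
        exact absurd h.symm (hz b)
      · subst hb
        rw [Function.update_self, Function.update_of_ne ha] at h
        exact absurd h (hz a)
      · rw [Function.update_of_ne ha, Function.update_of_ne hb] at h
        exact hv.1 h
    · have : j ≠ i := fun h => hj (h ▸ hi)
      rw [Function.update_of_ne this]
      exact hv.2 j hj
  have hm := hmax _ hv'
  rw [SchellingGame.pot_split _ (g.wgt_symm v) i (g.wgt_self v i),
    SchellingGame.pot_split _ (g.wgt_symm (Function.update v i z)) i (g.wgt_self _ i),
    g.wgt_sum, g.wgt_sum] at hm
  have hrest : ∑ a ∈ Finset.univ.erase i, ∑ b ∈ Finset.univ.erase i,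
      g.wgt (Function.update v i z) a b =
      ∑ a ∈ Finset.univ.erase i, ∑ b ∈ Finset.univ.erase i, g.wgt v a b := by
    refine Finset.sum_congr rfl fun a ha => Finset.sum_congr rfl fun b hb => ?_
    unfold SchellingGame.wgt
    rw [Function.update_of_ne (Finset.ne_of_mem_erase ha),
      Function.update_of_ne (Finset.ne_of_mem_erase hb)]
  have := SchellingGame.val_lt _ _ _ _ (g.count_le v hv.1 hdeg i)
    (g.count_le _ hv'.1 hdeg i) hlt
  rw [hrest] at hm
  omega
end

section
/- For every k ≥ 2 there exists a k-typed Schelling game with no stubborn agents (all agents strategic), with exactly 2k+1 agents of each type, whose topology is a tree, that admits no equilibrium assignment. -/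
namespace SchellingGame

section gen
variable {A V : Type} [Fintype A] [DecidableEq A] [Fintype V] [DecidableEq V]

lemma fcount_pos' (g : SchellingGame A V) (v : A → V) (i j : A) (h : g.net.Adj i j)
    (h2 : g.top.Adj (v i) (v j)) : 0 < g.fcount v i := by
  unfold fcount
  have : Nonempty {j : A // g.net.Adj i j ∧ g.top.Adj (v i) (v j)} := ⟨⟨j, h, h2⟩⟩
  exact Nat.card_pos

lemma util_pos' (g : SchellingGame A V) (v : A → V) (i : A) (h : 0 < g.fcount v i) :
    0 < g.util v i := by
  unfold util
  rw [if_neg h.ne']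
  have : (0 : ℚ) < g.fcount v i := by exact_mod_cast h
  positivity

lemma util_one' (g : SchellingGame A V) (v : A → V) (i : A) (h : 0 < g.fcount v i)
    (h2 : ∀ j, j ≠ i → g.top.Adj (v i) (v j) → g.net.Adj i j) : g.util v i = 1 := by
  have he : g.ecount v i = 0 := by
    unfold ecount
    have : IsEmpty {j : A // j ≠ i ∧ ¬ g.net.Adj i j ∧ g.top.Adj (v i) (v j)} :=
      ⟨fun ⟨j, h3, h4, h5⟩ => h4 (h2 j h3 h5)⟩
    exact Nat.card_of_isEmpty
  unfold util
  rw [if_neg h.ne', he]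
  have : (0 : ℚ) < g.fcount v i := by exact_mod_cast h
  simp [this.ne']

lemma util_lt_one' (g : SchellingGame A V) (v : A → V) (i j : A) (h1 : j ≠ i)
    (h2 : ¬ g.net.Adj i j) (h3 : g.top.Adj (v i) (v j)) : g.util v i < 1 := by
  have he : 0 < g.ecount v i := by
    unfold ecount
    have : Nonempty {j : A // j ≠ i ∧ ¬ g.net.Adj i j ∧ g.top.Adj (v i) (v j)} :=
      ⟨⟨j, h1, h2, h3⟩⟩
    exact Nat.card_pos
  unfold util
  split_ifs with h
  · norm_num
  · have : (0 : ℚ) < g.ecount v i := by exact_mod_cast he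
    rw [div_lt_one (by positivity)]
    linarith

lemma exists_friend (g : SchellingGame A V) (hs : g.strategic = Finset.univ) (v : A → V)
    (hv : g.IsEquilibrium v) (z : V) (hz : ∀ j, v j ≠ z) (i j : A) (h : g.net.Adj i j)
    (h2 : g.top.Adj z (v j)) : ∃ j', g.net.Adj i j' ∧ g.top.Adj (v i) (v j') := by
  have h3 := hv.2 i (by simp [hs]) z hz
  have h4 : 0 < g.util (Function.update v i z) i := by
    apply util_pos'
    apply fcount_pos' _ _ _ j h
    simpa [Function.update_of_ne h.ne'] using h2
  have h5 : 0 < g.util v i := h4.trans_le h3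
  by_contra hcon
  have : IsEmpty {j : A // g.net.Adj i j ∧ g.top.Adj (v i) (v j)} :=
    ⟨fun ⟨j, h⟩ => hcon ⟨j, h⟩⟩
  have h6 : g.fcount v i = 0 := Nat.card_of_isEmpty
  simp [util, h6] at h5

lemma all_friends (g : SchellingGame A V) (hs : g.strategic = Finset.univ) (v : A → V)
    (hv : g.IsEquilibrium v) (z : V) (hz : ∀ j, v j ≠ z) (i j : A) (h : g.net.Adj i j)
    (h2 : g.top.Adj z (v j)) (h3 : ∀ j', g.top.Adj z (v j') → j' = j)
    (j' : A) (h4 : g.top.Adj (v i) (v j')) : g.net.Adj i j' := by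
  have h5 := hv.2 i (by simp [hs]) z hz
  have h6 : g.util (Function.update v i z) i = 1 := by
    apply util_one'
    · apply fcount_pos' _ _ _ j h
      simpa [Function.update_of_ne h.ne'] using h2
    · intro l hl hl2
      rw [Function.update_self, Function.update_of_ne hl] at hl2
      rw [h3 l hl2]; exact h
  by_contra hcon
  have hne : j' ≠ i := by rintro rfl; exact g.top.irrefl h4
  have := util_lt_one' g v i j' hne hcon h4
  linarith

lemma transfer {W : Type} [Fintype W] [DecidableEq W] (g : SchellingGame A V) (e : V ≃ W)
    (T : SimpleGraph W) (hT : g.top = T.comap e) (hs : g.strategic = Finset.univ) (v : A → V)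
    (hv : g.IsEquilibrium v) :
    (⟨Finset.univ, g.net, T, fun a => e (g.loc a)⟩ : SchellingGame A W).IsEquilibrium (e ∘ v) := by
  have hu : ∀ (w : A → V) i,
      (⟨Finset.univ, g.net, T, fun a => e (g.loc a)⟩ : SchellingGame A W).util (e ∘ w) i
        = g.util w i := by
    intro w i
    obtain ⟨s, n, t, l⟩ := g
    simp only at hT
    subst hT
    rfl
  refine ⟨⟨e.injective.comp hv.1.1, by simp⟩, ?_⟩
  intro i _ z hz
  have := hv.2 i (by simp [hs]) (e.symm z) (fun j hj => hz j (by simp [hj]))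
  rw [hu v, ← hu] at *
  rw [Function.comp_update, e.apply_symm_apply] at this
  exact this.trans_eq (hu v i).symm
end gen

/-- nodes -/
abbrev Nd (k : ℕ) : Type := Option (Option (Fin (2 * k - 1) × Option (Fin k)))

/-- parent -/
def par {k : ℕ} : Nd k → Nd k
  | none => none
  | some none => none
  | some (some (_, none)) => none
  | some (some (i, some _)) => some (some (i, none))

/-- the tree -/
def tr (k : ℕ) : SimpleGraph (Nd k) := SimpleGraph.fromRel (fun a b => par a = b)

lemma tr_adj {k : ℕ} (a b : Nd k) : (tr k).Adj a b ↔ a ≠ b ∧ (par a = b ∨ par b = a) :=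
  SimpleGraph.fromRel_adj _ _ _

lemma tr_tree (k : ℕ) : (tr k).IsTree := by
  have hroot : ∀ x : Nd k, (tr k).Reachable x none := by
    have hm : ∀ i, (tr k).Reachable (some (some (i, none))) none := fun i =>
      SimpleGraph.Adj.reachable (by simp [tr_adj, par])
    rintro (_ | _ | ⟨i, _ | j⟩)
    · exact SimpleGraph.Reachable.refl _
    · exact SimpleGraph.Adj.reachable (by simp [tr_adj, par])
    · exact hm i
    · refine SimpleGraph.Reachable.trans (SimpleGraph.Adj.reachable ?_) (hm i)
      simp [tr_adj, par]
  have hc : (tr k).Connected :=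
    ⟨fun x y => (hroot x).trans (hroot y).symm⟩
  rw [SimpleGraph.isTree_iff_connected_and_card]
  refine ⟨hc, le_antisymm ?_ hc.card_vert_le_card_edgeSet_add_one⟩
  have hsub : (tr k).edgeSet ⊆ Set.range (fun x => s(some x, par (some x))) := by
    intro e
    induction e with | _ a b
    rw [SimpleGraph.mem_edgeSet, tr_adj]
    rintro ⟨h1, h2 | h2⟩
    · cases a with
      | none => exact absurd h2 h1
      | some x => exact ⟨x, by simp [h2]⟩
    · cases b with
      | none => exact absurd h2.symm h1
      | some x => exact ⟨x, by simp [h2, Sym2.eq_swap]⟩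
  have h1 := Nat.card_mono (Set.toFinite _) hsub
  have h2 := Finite.card_range_le
    (fun x : Option (Fin (2 * k - 1) × Option (Fin k)) => s(some x, par (some x)))
  have h3 : Nat.card (Nd k) = Nat.card (Option (Fin (2 * k - 1) × Option (Fin k))) + 1 := 
    Finite.card_option
  rw [h3]
  omega

set_option maxHeartbeats 4000000 in
lemma main {A : Type} [Fintype A] [DecidableEq A] (k : ℕ) (hk : 2 ≤ k)
    (g : SchellingGame A (Nd k)) (hs : g.strategic = Finset.univ) (ht : g.top = tr k)
    (typ : A → Fin k) (hnet : ∀ i j, g.net.Adj i j ↔ i ≠ j ∧ typ i = typ j)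
    (hcard : ∀ c, Nat.card {i // typ i = c} = 2 * k + 1)
    (hA : Fintype.card A + 1 = Fintype.card (Nd k)) (v : A → Nd k)
    (hv : g.IsEquilibrium v) : False := by
  have hinj := hv.1.1
  obtain ⟨z, hz, hsurj⟩ : ∃ z, (∀ j, v j ≠ z) ∧ ∀ x, x ≠ z → ∃ i, v i = x := by
    have h1 : (Finset.univ.image v)ᶜ.card = 1 := by
      rw [Finset.card_compl, Finset.card_image_of_injective _ hinj, Finset.card_univ]; omega
    obtain ⟨z, hz⟩ := Finset.card_eq_one.1 h1
    refine ⟨z, fun j hj => ?_, fun x hx => ?_⟩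
    · have : z ∈ (Finset.univ.image v)ᶜ := by simp [hz]
      simp at this; exact this j hj
    · by_contra hcon
      have : x ∈ (Finset.univ.image v)ᶜ := by simpa using hcon
      rw [hz] at this; exact hx (by simpa using this)
  have hF := exists_friend g hs v hv z hz
  have hG := all_friends g hs v hv z hz
  simp only [ht, tr_adj, hnet] at hF hG
  -- the set of nodes of type c
  have hT : ∀ c, ∃ T : Finset (Nd k), T.card = 2 * k + 1 ∧
      ∀ x, x ∈ T ↔ ∃ i, typ i = c ∧ v i = x := by
    intro c
    refine ⟨(Finset.univ.filter (fun i => typ i = c)).image v, ?_, by simp⟩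
    rw [Finset.card_image_of_injective _ hinj, ← hcard c, Nat.card_eq_fintype_card,
      Fintype.card_subtype]
  rcases z with _ | _ | ⟨u, _ | l⟩
  · -- root empty
    obtain ⟨a, ha⟩ := hsurj (some none) (by simp)
    obtain ⟨T, hT1, hT2⟩ := hT (typ a)
    have hsub : T ⊆ {some none} := by
      intro x hx
      obtain ⟨i, hi, rfl⟩ := (hT2 x).1 hx
      by_contra hne
      rw [Finset.mem_singleton] at hne
      have hia : i ≠ a := by rintro rfl; exact hne ha
      rcases hvi : v i with _ | _ | ⟨w, _ | j⟩
      · exact hz i hvi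
      · exact hne hvi
      · obtain ⟨j', -, h1, h2⟩ := hF a i ⟨hia.symm, hi.symm⟩ (by simp [hvi, par])
        have h3 := hz j'
        rw [ha] at h1 h2
        rcases hvj : v j' with _ | _ | ⟨w, _ | j⟩ <;> simp [hvj, par] at h1 h2 h3
      · obtain ⟨j', ⟨h0, h0'⟩, h1, h2⟩ := hF i a ⟨hia, hi⟩ (by simp [ha, par])
        have h4 : v j' = some (some (w, none)) := by
          rw [hvi] at h1 h2
          rcases hvj : v j' with _ | _ | ⟨w, _ | j⟩ <;> simp_all [par]
        have hja : j' ≠ a := by rintro rfl; simp [ha] at h4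
        obtain ⟨j'', -, h1, h2⟩ := hF a j' ⟨hja.symm, by rw [← h0', hi]⟩ (by simp [h4, par])
        have h3 := hz j''
        rw [ha] at h1 h2
        rcases hvj : v j'' with _ | _ | ⟨w, _ | j⟩ <;> simp [hvj, par] at h1 h2 h3
    have := Finset.card_le_card hsub
    simp at this; omega
  · -- root leaf empty
    obtain ⟨r, hr⟩ := hsurj none (by simp)
    obtain ⟨T, hT1, hT2⟩ := hT (typ r)
    have hadj : ∀ i, i ≠ r → typ i = typ r → ∀ j', (v i ≠ v j' ∧ (par (v i) = v j' ∨ par (v j') = v i)) →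
        typ j' = typ r := by
      intro i hi1 hi2 j' h
      have := hG i r ⟨hi1, hi2⟩ (by simp [hr, par]) (by
        intro j h
        apply hinj
        rw [hr]
        rcases hvj : v j with _ | _ | ⟨w, _ | j⟩ <;> simp_all [par]) j' h
      rw [← this.2, hi2]
    let S : Finset (Fin (2 * k - 1)) := Finset.univ.filter (fun i => some (some (i, none)) ∈ T)
    have hTe : T = insert none ((S ×ˢ (Finset.univ : Finset (Option (Fin k)))).image
        (fun x => some (some x))) := by
      ext x
      have hml : ∀ w j, some (some (w, none)) ∈ T ↔ some (some (w, some j)) ∈ T := by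
        intro w j
        obtain ⟨m, hm⟩ := hsurj (some (some (w, none))) (by simp)
        obtain ⟨l, hl⟩ := hsurj (some (some (w, some j))) (by simp)
        rw [hT2, hT2]
        constructor
        · rintro ⟨i, hi, hi2⟩
          exact ⟨l, hadj i (by rintro rfl; simp [hr] at hi2) hi l (by simp [hi2, hl, par]), hl⟩
        · rintro ⟨i, hi, hi2⟩
          exact ⟨m, hadj i (by rintro rfl; simp [hr] at hi2) hi m (by simp [hi2, hm, par]), hm⟩
      rcases x with _ | _ | ⟨w, _ | j⟩
      · simp [hT2]; exact ⟨r, rfl, hr⟩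
      · simp [hT2]; exact fun i _ => hz i
      · simp [S]
      · simp [S, hml w j]
    rw [hTe, Finset.card_insert_of_notMem (by simp), Finset.card_image_of_injective _ (by
      intro a b h; simpa using h), Finset.card_product] at hT1
    simp at hT1
    rcases Nat.lt_or_ge S.card 2 with h | h
    · interval_cases S.card <;> omega
    · nlinarith
  · -- mid empty
    obtain ⟨r, hr⟩ := hsurj none (by simp)
    have hl : ∀ j : Fin k, ∃ i, v i = some (some (u, some j)) := fun j => hsurj _ (by simp)
    choose f hf using hl
    have hno : ∀ j j', typ (f j) = typ j' → f j ≠ j' →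
        (v j' = none ∨ ∃ l, v j' = some (some (u, some l))) → False := by
      intro j j' h1 h2 h3
      obtain ⟨j'', -, h1, h2⟩ := hF (f j) j' ⟨h2, h1⟩ (by
        rcases h3 with h3 | ⟨l, h3⟩ <;> simp [h3, par])
      have h3 := hz j''
      rw [hf] at h1 h2
      rcases hvj : v j'' with _ | _ | ⟨w, _ | j⟩ <;> simp_all [par]
    have hi : Function.Injective (fun j => typ (f j)) := by
      intro j j' h
      by_contra hne
      refine hno j (f j') h (fun h => hne ?_) (Or.inr ⟨j', hf j'⟩)
      have := hf j; rw [h, hf] at this; simpa using this.symm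
    obtain ⟨j, hj⟩ := Finite.surjective_of_injective hi (typ r)
    refine hno j r hj (fun h => ?_) (Or.inl hr)
    have := hf j; rw [h, hr] at this; simp at this
  · -- leaf empty
    obtain ⟨r, hr⟩ := hsurj none (by simp)
    obtain ⟨m, hm⟩ := hsurj (some (some (u, none))) (by simp)
    obtain ⟨T, hT1, hT2⟩ := hT (typ m)
    have hadj : ∀ i, i ≠ m → typ i = typ m → ∀ j', (v i ≠ v j' ∧ (par (v i) = v j' ∨ par (v j') = v i)) →
        typ j' = typ m := by
      intro i hi1 hi2 j' h
      have := hG i m ⟨hi1, hi2⟩ (by simp [hm, par]) (by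
        intro j h
        apply hinj
        rw [hm]
        rcases hvj : v j with _ | _ | ⟨w, _ | j⟩ <;> simp_all [par]) j' h
      rw [← this.2, hi2]
    have hrm : r ≠ m := by rintro rfl; simp [hr] at hm
    by_cases hc : typ r = typ m
    · have hsub : ((({u} : Finset (Fin (2 * k - 1)))ᶜ ×ˢ (Finset.univ : Finset (Option (Fin k)))).image
          (fun x => some (some x))) ⊆ T := by
        intro x hx
        simp only [Finset.mem_image, Finset.mem_product, Finset.mem_compl, Finset.mem_singleton,
          Finset.mem_univ, and_true, Prod.exists] at hx
        obtain ⟨w, o, hw, rfl⟩ := hx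
        obtain ⟨m', hm'⟩ := hsurj (some (some (w, none))) (by simp)
        have h1 : typ m' = typ m := hadj r hrm hc m' (by simp [hr, hm', par])
        rw [hT2]
        rcases o with _ | j
        · exact ⟨m', h1, hm'⟩
        · obtain ⟨l', hl'⟩ := hsurj (some (some (w, some j))) (by simp [hw])
          refine ⟨l', hadj m' ?_ h1 l' (by simp [hm', hl', par]), hl'⟩
          rintro rfl
          rw [hm] at hm'; simp at hm'; exact hw hm'.symm
      have := Finset.card_le_card hsub
      rw [Finset.card_image_of_injective _ (by intro a b h; simpa using h), Finset.card_product,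
        Finset.card_compl, hT1] at this
      simp at this
      obtain ⟨q, rfl⟩ := Nat.exists_eq_add_of_le hk
      have h2 : 2 * (2 + q) - 1 - 1 = 2 * q + 2 := by omega
      rw [h2] at this
      nlinarith
    · have hsub : T ⊆ ((({u} : Finset (Fin (2 * k - 1))) ×ˢ (Finset.univ : Finset (Option (Fin k)))).image
          (fun x => some (some x))) := by
        intro x hx
        obtain ⟨i, hi, rfl⟩ := (hT2 x).1 hx
        have hmid : ∀ i w, typ i = typ m → v i = some (some (w, none)) → u = w := by
          intro i w hi h
          by_contra hne
          refine hc (hadj i ?_ hi r (by simp [h, hr, par]))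
          rintro rfl; rw [hm] at h; simp at h; exact hne h
        rcases hvi : v i with _ | _ | ⟨w, _ | j⟩
        · rw [← hr] at hvi; exact absurd (hinj hvi ▸ hi) hc
        · refine absurd (hadj i ?_ hi r (by simp [hvi, hr, par])) hc
          rintro rfl; simp [hm] at hvi
        · simp [hmid i w hi hvi]
        · obtain ⟨m', hm'⟩ := hsurj (some (some (w, none))) (by simp)
          have := hadj i (by rintro rfl; simp [hm] at hvi) hi m' (by simp [hvi, hm', par])
          simp [hmid m' w this hm']
      have := Finset.card_le_card hsub
      rw [Finset.card_image_of_injective _ (by intro a b h; simpa using h), Finset.card_product,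
        hT1] at this
      simp at this
      omega

end SchellingGame

open SchellingGame in
/-- For every k ≥ 2 there exists a k-typed Schelling game with no stubborn
agents, exactly 2k+1 agents of each type, whose topology is a tree, with no equilibrium. -/
theorem stmt4 (k : ℕ) (hk : 2 ≤ k) :
    ∃ (g : SchellingGame (Fin (k * (2 * k + 1))) (Fin (k * (2 * k + 1) + 1)))
      (typ : Fin (k * (2 * k + 1)) → Fin k),
      g.WellFormed ∧ g.IsTypedGame k typ ∧ g.strategic = Finset.univ ∧
      (∀ c : Fin k, Nat.card {i // typ i = c} = 2 * k + 1) ∧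
      g.top.IsTree ∧ ¬ ∃ v, g.IsEquilibrium v := by
  have hV : Fintype.card (Nd k) = k * (2 * k + 1) + 1 := by
    simp only [Nd, Fintype.card_option, Fintype.card_prod, Fintype.card_fin]
    obtain ⟨q, rfl⟩ := Nat.exists_eq_add_of_le hk
    have h2 : 2 * (2 + q) - 1 = 2 * q + 3 := by omega
    rw [h2]; ring
  let e : Fin (k * (2 * k + 1) + 1) ≃ Nd k := (Fintype.equivFinOfCardEq hV).symm
  let typ : Fin (k * (2 * k + 1)) → Fin k := fun i => (finProdFinEquiv.symm i).1
  let net : SimpleGraph (Fin (k * (2 * k + 1))) :=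
    { Adj := fun i j => i ≠ j ∧ typ i = typ j
      symm := ⟨fun i j h => ⟨h.1.symm, h.2.symm⟩⟩
      loopless := ⟨fun i h => h.1 rfl⟩ }
  have hcard : ∀ c : Fin k, Nat.card {i // typ i = c} = 2 * k + 1 := by
    intro c
    have e2 : {i // typ i = c} ≃ Fin (2 * k + 1) :=
      { toFun := fun i => (finProdFinEquiv.symm i.1).2
        invFun := fun j => ⟨finProdFinEquiv (c, j), by
          show (finProdFinEquiv.symm (finProdFinEquiv (c, j))).1 = c
          rw [Equiv.symm_apply_apply]⟩
        left_inv := by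
          rintro ⟨i, hi⟩
          apply Subtype.ext
          simp only
          rw [← hi]
          exact finProdFinEquiv.apply_symm_apply i
        right_inv := by
          intro j
          show (finProdFinEquiv.symm (finProdFinEquiv (c, j))).2 = j
          rw [Equiv.symm_apply_apply] }
    rw [Nat.card_congr e2, Nat.card_fin]
  refine ⟨⟨Finset.univ, net, (tr k).comap e, fun _ => 0⟩, typ, ⟨?_, by simp, by simp⟩,
    ⟨fun i j => Iff.rfl, fun c => ?_⟩, rfl, hcard, ?_, ?_⟩
  · rw [Fintype.card_fin]; nlinarith
  · exact ⟨finProdFinEquiv (c, 0), by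
      show (finProdFinEquiv.symm (finProdFinEquiv (c, 0))).1 = c
      rw [Equiv.symm_apply_apply]⟩
  · exact (SimpleGraph.Iso.comap e (tr k)).isTree_iff.2 (tr_tree k)
  · rintro ⟨v, hv⟩
    have := transfer _ e (tr k) rfl rfl v hv
    exact main k hk _ rfl rfl typ (fun i j => Iff.rfl) hcard (by rw [hV, Fintype.card_fin]) _ this
end

section
/- Let H = (X,Y) be an undirected graph with |X| ≥ 3. Construct a social Schelling game in which the agents are the vertices of H, all agents are strategic, the social network is H itself (so the friends of agent p are the neighbors of p in H), and the topology is the disjoint union of a cycle on |X| nodes and one isolated node. Then this game admits an assignment with social welfare at least |X| if and only if H has a Hamiltonian cycle. -/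
/-- The topology: a cycle on the `m` nodes `some i` together with one isolated node
`none`. -/
def top7 (m : ℕ) : SimpleGraph (Option (Fin m)) :=
  SimpleGraph.fromRel (fun p q => match p, q with
    | some i, some j => (j : ℕ) = ((i : ℕ) + 1) % m
    | _, _ => False)

/-- The social Schelling game whose agents are the vertices of `H`, all strategic,
whose social network is `H` itself, and whose topology is the disjoint union of a
cycle on `|X|` nodes and one isolated node. -/
def game7 (X : Type) [Fintype X] [DecidableEq X] (H : SimpleGraph X) :
    SchellingGame X (Option (Fin (Fintype.card X))) where
  strategic := Finset.univ
  net := H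
  top := top7 (Fintype.card X)
  loc := fun _ => none

theorem top7_adj_some {m : ℕ} (hm : 3 ≤ m) (i j : Fin m) :
    (top7 m).Adj (some i) (some j) ↔
      ((j : ℕ) = ((i : ℕ) + 1) % m ∨ (i : ℕ) = ((j : ℕ) + 1) % m) := by
  have key : ∀ a : Fin m, (a : ℕ) ≠ ((a : ℕ) + 1) % m := by
    intro a h
    have ha := a.2
    by_cases h1 : (a : ℕ) + 1 = m
    · rw [h1, Nat.mod_self] at h
      omega
    · rw [Nat.mod_eq_of_lt (by omega)] at h
      omega
  unfold top7
  rw [SimpleGraph.fromRel_adj]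
  constructor
  · exact fun h => h.2
  · intro h
    refine ⟨?_, h⟩
    intro hij
    have hij := Option.some.inj hij
    subst hij
    rcases h with h | h <;> exact key _ h

theorem top7_not_adj_none {m : ℕ} (q : Option (Fin m)) :
    ¬ (top7 m).Adj none q := by
  unfold top7
  rw [SimpleGraph.fromRel_adj]
  cases q <;> simp

theorem util_le_one7 {A V : Type} (g : SchellingGame A V) (v : A → V) (i : A) :
    g.util v i ≤ 1 := by
  unfold SchellingGame.util
  split_ifs with h
  · norm_num
  · exact div_le_one_of_le₀ (by simp) (by positivity)

theorem util_eq_one7 {A V : Type} (g : SchellingGame A V) (v : A → V) (i : A) :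
    g.util v i = 1 ↔ g.fcount v i ≠ 0 ∧ g.ecount v i = 0 := by
  unfold SchellingGame.util
  split_ifs with h
  · simp [h]
  · have : (g.fcount v i : ℚ) + (g.ecount v i : ℚ) ≠ 0 := by
      have : (0 : ℚ) < g.fcount v i := by exact_mod_cast Nat.pos_of_ne_zero h
      positivity
    rw [div_eq_one_iff_eq this]
    simp [h]

/-- the game above admits an assignment with social welfare at least |X|
iff H has a Hamiltonian cycle, i.e. a cyclic ordering of all its vertices in which
consecutive vertices are adjacent. -/
theorem stmt7 (X : Type) [Fintype X] [DecidableEq X] (H : SimpleGraph X)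
    (hX : 3 ≤ Fintype.card X) :
    (∃ v, (game7 X H).IsAssignment v ∧ (Fintype.card X : ℚ) ≤ (game7 X H).SW v) ↔
      ∃ e : Fin (Fintype.card X) ≃ X, ∀ i : Fin (Fintype.card X),
        H.Adj (e i) (e ⟨((i : ℕ) + 1) % Fintype.card X, Nat.mod_lt _ (by omega)⟩) := by
  constructor
  · rintro ⟨v, ⟨hinj, -⟩, hsw⟩
    have h1 : ∀ x, (game7 X H).util v x = 1 := by
      have hle : ∀ x ∈ (Finset.univ : Finset X), (game7 X H).util v x ≤ 1 :=
        fun x _ => util_le_one7 _ _ _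
      have hs : ∑ x : X, (game7 X H).util v x = ∑ x : X, (1 : ℚ) := by
        apply le_antisymm (Finset.sum_le_sum hle)
        rw [Finset.sum_const, Finset.card_univ, nsmul_eq_mul, mul_one]
        exact hsw
      intro x
      exact (Finset.sum_eq_sum_iff_of_le hle).1 hs x (Finset.mem_univ x)
    have hsome : ∀ x, ∃ i, v x = some i := by
      intro x
      have hf := ((util_eq_one7 _ _ _).1 (h1 x)).1
      by_contra hne
      have hnone : v x = none := by
        cases hvx : v x with
        | none => rfl
        | some i => exact absurd ⟨i, hvx⟩ hne
      apply hf
      unfold SchellingGame.fcount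
      rw [Nat.card_eq_zero]
      left
      refine ⟨fun ⟨j, _, hj⟩ => ?_⟩
      rw [hnone] at hj
      exact top7_not_adj_none _ hj
    choose w hw using hsome
    have hwinj : Function.Injective w := by
      intro a b hab
      apply hinj
      rw [hw, hw, hab]
    have hbij : Function.Bijective w :=
      (Fintype.bijective_iff_injective_and_card w).2 ⟨hwinj, by simp⟩
    let e := (Equiv.ofBijective w hbij).symm
    have hve : ∀ i, v (e i) = some i := by
      intro i
      rw [hw]
      congr 1
      exact (Equiv.ofBijective w hbij).apply_symm_apply i
    refine ⟨e, fun i => ?_⟩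
    have he := ((util_eq_one7 _ _ _).1 (h1 (e i))).2
    unfold SchellingGame.ecount at he
    rw [Nat.card_eq_zero] at he
    have he := he.resolve_right (fun h => h.not_finite inferInstance)
    by_contra hna
    have hadj : (top7 (Fintype.card X)).Adj (v (e i))
        (v (e ⟨((i : ℕ) + 1) % Fintype.card X, Nat.mod_lt _ (by omega)⟩)) := by
      rw [hve, hve, top7_adj_some hX]
      left
      rfl
    refine he.false ⟨_, ?_, hna, hadj⟩
    intro heq
    rw [heq] at hadj
    exact hadj.ne rfl
  · rintro ⟨e, he⟩
    refine ⟨fun x => some (e.symm x), ⟨?_, fun i hi => absurd (Finset.mem_univ i) hi⟩, ?_⟩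
    · intro a b hab
      simpa using hab
    · have hu : ∀ x, (game7 X H).util (fun x => some (e.symm x)) x = 1 := by
        intro x
        rw [util_eq_one7]
        constructor
        · unfold SchellingGame.fcount
          rw [Nat.card_ne_zero]
          refine ⟨⟨⟨e ⟨((e.symm x : ℕ) + 1) % Fintype.card X, Nat.mod_lt _ (by omega)⟩,
            ?_, ?_⟩⟩, inferInstance⟩
          · have := he (e.symm x)
            rw [e.apply_symm_apply] at this
            exact this
          · refine (top7_adj_some hX _ _).2 (Or.inl ?_)
            rw [e.symm_apply_apply]
        · unfold SchellingGame.ecount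
          rw [Nat.card_eq_zero]
          left
          refine ⟨fun ⟨y, _, hna, hy⟩ => hna ?_⟩
          change H.Adj x y
          rcases (top7_adj_some hX _ _).1 hy with h | h
          · have := he (e.symm x)
            simp only [← h] at this
            simpa using this
          · have := he (e.symm y)
            simp only [← h] at this
            simpa using this.symm
      unfold SchellingGame.SW
      rw [Finset.sum_congr rfl (fun x _ => hu x)]
      simp [game7]
end

section
/- For every k ≥ 2 and every integer n ≥ 2k, there exists a k-typed Schelling game with no stubborn agents, n strategic agents, at least two agents of each type, and a star topology with n+1 nodes, which admits an equilibrium assignment with social welfare at most 2 and also admits an assignment with social welfare at least n − 2k; consequently its price of anarchy is at least n/2 − k. -/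
def starG (m : ℕ) : SimpleGraph (Fin (m + 1)) where
  Adj a b := a ≠ b ∧ (a = 0 ∨ b = 0)
  symm := ⟨fun a b h => ⟨h.1.symm, h.2.symm⟩⟩
  loopless := ⟨fun a h => h.1 rfl⟩

def theG {n k : ℕ} (typ : Fin n → Fin k) : SchellingGame (Fin n) (Fin (n + 1)) where
  strategic := Finset.univ
  net := { Adj := fun i j => i ≠ j ∧ typ i = typ j
           symm := ⟨fun a b h => ⟨h.1.symm, h.2.symm⟩⟩
           loopless := ⟨fun a h => h.1 rfl⟩ }
  top := starG n
  loc := fun i => i.succ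

def plc {n : ℕ} (b : Fin n) : Fin n → Fin (n + 1) := fun i => if i = b then 0 else i.succ

lemma plc_zero {n : ℕ} (b j : Fin n) : plc b j = 0 ↔ j = b := by
  unfold plc
  split_ifs with h <;> simp [h, Fin.succ_ne_zero]

lemma plc_inj {n : ℕ} (b : Fin n) : Function.Injective (plc b) := by
  intro i j h
  by_cases hi : i = b
  · have := (plc_zero b i).2 hi
    rw [h, plc_zero] at this
    rw [hi, this]
  · by_cases hj : j = b
    · have := (plc_zero b j).2 hj
      rw [← h, plc_zero] at this
      exact absurd this hi
    · simpa [plc, hi, hj] using h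

lemma util_nonneg' {n k : ℕ} (typ : Fin n → Fin k) (v : Fin n → Fin (n + 1)) (i : Fin n) :
    0 ≤ (theG typ).util v i := by
  unfold SchellingGame.util
  split_ifs <;> positivity

lemma util_le_one' {n k : ℕ} (typ : Fin n → Fin k) (v : Fin n → Fin (n + 1)) (i : Fin n) :
    (theG typ).util v i ≤ 1 := by
  unfold SchellingGame.util
  split_ifs
  · norm_num
  · apply div_le_one_of_le₀
    · have : (0 : ℚ) ≤ ((theG typ).ecount v i : ℚ) := by positivity
      linarith
    · positivity

lemma util_leaf {n k : ℕ} (typ : Fin n → Fin k) (v : Fin n → Fin (n + 1)) (b i : Fin n)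
    (hv : ∀ j, v j = 0 ↔ j = b) (hi : i ≠ b) :
    (theG typ).util v i = if typ i = typ b then 1 else 0 := by
  have hi0 : v i ≠ 0 := fun h => hi ((hv i).1 h)
  have hadj : ∀ j, (theG typ).top.Adj (v i) (v j) ↔ j = b := by
    intro j
    change (v i ≠ v j ∧ (v i = 0 ∨ v j = 0)) ↔ _
    rw [hv j]
    constructor
    · rintro ⟨_, h | h⟩
      · exact absurd h hi0
      · exact h
    · intro h
      refine ⟨?_, Or.inr h⟩
      rw [(hv j).2 h]
      exact hi0
  split_ifs with ht
  · have hf : (theG typ).fcount v i = 1 := by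
      unfold SchellingGame.fcount
      rw [Nat.card_eq_one_iff_unique]
      refine ⟨⟨?_⟩, ⟨⟨b, ⟨hi, ht⟩, (hadj b).2 rfl⟩⟩⟩
      rintro ⟨x, _, hx⟩ ⟨y, _, hy⟩
      rw [hadj] at hx hy
      simp [hx, hy]
    have he : (theG typ).ecount v i = 0 := by
      unfold SchellingGame.ecount
      rw [Nat.card_eq_zero]
      left
      refine ⟨?_⟩
      rintro ⟨x, _, h, hx⟩
      rw [hadj] at hx
      subst hx
      exact h ⟨hi, ht⟩
    simp [SchellingGame.util, hf, he]
  · have hf : (theG typ).fcount v i = 0 := by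
      unfold SchellingGame.fcount
      rw [Nat.card_eq_zero]
      left
      refine ⟨?_⟩
      rintro ⟨x, h, hx⟩
      rw [hadj] at hx
      subst hx
      exact ht h.2
    simp [SchellingGame.util, hf]

lemma util_none {n k : ℕ} (typ : Fin n → Fin k) (v : Fin n → Fin (n + 1)) (i : Fin n)
    (hv : ∀ j, v j ≠ 0) : (theG typ).util v i = 0 := by
  have hf : (theG typ).fcount v i = 0 := by
    unfold SchellingGame.fcount
    rw [Nat.card_eq_zero]
    left
    refine ⟨?_⟩
    rintro ⟨x, _, hx⟩
    rcases hx.2 with h | h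
    · exact hv _ h
    · exact hv _ h
  simp [SchellingGame.util, hf]

lemma plc_eq {n k : ℕ} (typ : Fin n → Fin k) (b : Fin n) :
    (theG typ).IsEquilibrium (plc b) := by
  refine ⟨⟨plc_inj b, fun i hi => absurd (Finset.mem_univ i) hi⟩, ?_⟩
  intro i _ z hz
  have hz0 : z ≠ 0 := fun h => hz b (by rw [h, plc_zero])
  by_cases hi : i = b
  · subst hi
    rw [util_none]
    · exact util_nonneg' _ _ _
    · intro j
      by_cases hj : j = i
      · subst hj; simpa using hz0
      · rw [Function.update_of_ne hj]
        exact fun h => hj ((plc_zero _ _).1 h)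
  · rw [util_leaf typ _ b i _ hi, util_leaf typ _ b i (plc_zero b) hi]
    intro j
    by_cases hj : j = i
    · subst hj; simp [hz0, hi]
    · rw [Function.update_of_ne hj, plc_zero]

/-- for all k ≥ 2 and n ≥ 2k there is a k-typed Schelling game with no
stubborn agents, n agents, at least two agents of each type and a star topology with
n+1 nodes, admitting an equilibrium of social welfare at most 2 and an assignment of
social welfare at least n - 2k; hence its price of anarchy is at least n/2 - k. -/
theorem stmt9 (k n : ℕ) (hk : 2 ≤ k) (hn : 2 * k ≤ n) :
    ∃ (g : SchellingGame (Fin n) (Fin (n + 1))) (typ : Fin n → Fin k),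
      g.WellFormed ∧ g.IsTypedGame k typ ∧ g.strategic = Finset.univ ∧
      (∀ c : Fin k, 2 ≤ Nat.card {i // typ i = c}) ∧
      IsStar g.top ∧
      (∃ v w, g.IsEquilibrium v ∧ g.SW v ≤ 2 ∧
        g.IsAssignment w ∧ (n : ℚ) - 2 * k ≤ g.SW w ∧
        ((n : ℚ) / 2 - k) * g.SW v ≤ g.SW w) := by
  have hk0 : 0 < k := by omega
  let typ : Fin n → Fin k := fun i =>
    if i.val < 2 * k then ⟨i.val % k, Nat.mod_lt _ hk0⟩ else ⟨0, hk0⟩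
  let b : Fin n := ⟨1, by omega⟩
  let b' : Fin n := ⟨1 + k, by omega⟩
  let a : Fin n := ⟨0, by omega⟩
  have hbt : ∀ i, typ i = typ b → i = b ∨ i = b' := by
    intro i h
    have hb : (typ b).val = 1 := by
      have h1 : 1 < 2 * k := by omega
      simp [typ, b, h1, Nat.mod_eq_of_lt (show 1 < k by omega)]
    have h2 : (typ i).val = 1 := by rw [h, hb]
    by_cases hi : i.val < 2 * k
    · simp only [typ, if_pos hi] at h2
      by_cases hi' : i.val < k
      · rw [Nat.mod_eq_of_lt hi'] at h2
        left; exact Fin.ext h2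
      · rw [Nat.mod_eq_sub_mod (by omega), Nat.mod_eq_of_lt (by omega)] at h2
        right; apply Fin.ext; change i.val = 1 + k; omega
    · simp [typ, if_neg hi] at h2
  have hSv : (theG typ).SW (plc b) ≤ 2 := by
    calc (theG typ).SW (plc b)
        ≤ ∑ i : Fin n, ((if i = b then (1 : ℚ) else 0) + (if i = b' then 1 else 0)) := by
          apply Finset.sum_le_sum
          intro i _
          by_cases hi : i = b
          · have := util_le_one' typ (plc b) i
            have h2 : (0 : ℚ) ≤ (if i = b' then 1 else 0) := by split_ifs <;> norm_num
            rw [if_pos hi]; linarith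
          · rw [util_leaf typ _ b i (plc_zero b) hi]
            split_ifs with h1 h2 <;> try norm_num
            rcases hbt i h1 with h | h <;> contradiction
      _ = 2 := by
          rw [Finset.sum_add_distrib]
          simp
          norm_num
  have hSw : (n : ℚ) - 2 * k ≤ (theG typ).SW (plc a) := by
    calc (n : ℚ) - 2 * k = ∑ i : Fin n, (if 2 * k ≤ i.val then (1 : ℚ) else 0) := by
          rw [Fin.sum_univ_eq_sum_range (fun i => if 2 * k ≤ i then (1 : ℚ) else 0) n]
          rw [← Finset.sum_range_add_sum_Ico _ hn, Finset.sum_eq_zero, Finset.sum_congr rfl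
            (g := fun _ => (1 : ℚ))]
          · simp [Nat.cast_sub hn]
          · intro x hx
            rw [if_pos (Finset.mem_Ico.1 hx).1]
          · intro x hx
            rw [if_neg (not_le.2 (Finset.mem_range.1 hx))]
      _ ≤ _ := by
          apply Finset.sum_le_sum
          intro i _
          split_ifs with h
          · have hia : i ≠ a := by
              intro h'
              rw [h'] at h
              change 2 * k ≤ 0 at h
              omega
            rw [util_leaf typ _ a i (plc_zero a) hia, if_pos]
            simp only [typ, a, if_neg (not_lt.2 h)]
            simp
          · exact util_nonneg' _ _ _
  have t1 : ∀ c : Fin k, typ ⟨c.val, by omega⟩ = c := by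
    intro c
    apply Fin.ext
    have h1 : c.val < 2 * k := by omega
    simp [typ, h1, Nat.mod_eq_of_lt c.2]
  have t2 : ∀ c : Fin k, typ ⟨c.val + k, by omega⟩ = c := by
    intro c
    apply Fin.ext
    have h1 : c.val + k < 2 * k := by omega
    simp [typ, h1, Nat.mod_eq_of_lt c.2]
  refine ⟨theG typ, typ, ⟨?_, ?_, ?_⟩, ⟨fun i j => Iff.rfl, fun c => ⟨_, t1 c⟩⟩, rfl, ?_,
    ⟨0, fun _ _ => Iff.rfl⟩, plc b, plc a, plc_eq _ _, hSv, (plc_eq _ _).1, hSw, ?_⟩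
  · simp; omega
  · simp
  · simp [theG]
  · intro c
    have : Nontrivial {i // typ i = c} := by
      refine ⟨⟨⟨_, t1 c⟩, ⟨_, t2 c⟩, ?_⟩⟩
      intro h
      have := congrArg (fun x => x.1.val) h
      simp at this
      omega
    have := Finite.one_lt_card (α := {i // typ i = c})
    omega
  · have hnk : (2 : ℚ) * k ≤ n := by exact_mod_cast hn
    nlinarith
end

section
/- In every k-typed Schelling game with no stubborn agents whose topology is a connected graph with strictly more nodes than agents and in which every type contains at least two agents, every equilibrium assignment has social welfare at least 1; consequently, the price of anarchy of any such game is at most n, where n is the number of agents. -/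
namespace SchellingGame

open Classical in
theorem aux_f {A V : Type} [Fintype A] [DecidableEq A]
    (g : SchellingGame A V) (v : A → V) (i : A) (z : V) :
    g.fcount (Function.update v i z) i =
      (Finset.univ.filter (fun j => g.net.Adj i j ∧ g.top.Adj z (v j))).card := by
  unfold fcount
  rw [Nat.card_eq_fintype_card, Fintype.card_subtype]
  congr 1
  ext j
  simp only [Finset.mem_filter, Finset.mem_univ, true_and, Function.update_self]
  refine and_congr_right fun h => ?_
  rw [Function.update_of_ne h.ne']

open Classical in
theorem aux_fe {A V : Type} [Fintype A] [DecidableEq A]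
    (g : SchellingGame A V) (v : A → V) (i : A) (z : V) :
    g.fcount (Function.update v i z) i + g.ecount (Function.update v i z) i ≤
      (Finset.univ.filter (fun j => g.top.Adj z (v j))).card := by
  rw [aux_f]
  unfold ecount
  rw [Nat.card_eq_fintype_card, Fintype.card_subtype, ← Finset.card_union_of_disjoint]
  · apply Finset.card_le_card
    intro j
    simp only [Finset.mem_union, Finset.mem_filter, Finset.mem_univ, true_and,
      Function.update_self]
    rintro (h | ⟨h1, h2, h3⟩)
    · exact h.2
    · rwa [Function.update_of_ne h1] at h3
  · rw [Finset.disjoint_left]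
    intro j
    simp only [Finset.mem_filter, Finset.mem_univ, true_and]
    tauto

open Classical in
theorem aux_util {A V : Type} [Fintype A] [DecidableEq A]
    (g : SchellingGame A V) (v : A → V) (i : A) (z : V) :
    ((Finset.univ.filter (fun j => g.net.Adj i j ∧ g.top.Adj z (v j))).card : ℚ) /
      ((Finset.univ.filter (fun j => g.top.Adj z (v j))).card : ℚ)
      ≤ g.util (Function.update v i z) i := by
  have h1 := aux_fe g v i z
  rw [← aux_f]
  unfold util
  split_ifs with h
  · simp [h]
  · have h0 : (0 : ℚ) < g.fcount (Function.update v i z) i := by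
      exact_mod_cast Nat.pos_of_ne_zero h
    apply div_le_div_of_nonneg_left h0.le (by positivity)
    exact_mod_cast h1

theorem util_le_one {A V : Type}
    (g : SchellingGame A V) (v : A → V) (i : A) : g.util v i ≤ 1 := by
  unfold util
  split_ifs with h
  · norm_num
  · apply div_le_one_of_le₀
    · have : (0 : ℚ) ≤ g.ecount v i := by positivity
      linarith
    · positivity

end SchellingGame

/-- in every k-typed Schelling game with no stubborn agents, a connected
topology with strictly more nodes than agents, and at least two agents of each type,
every equilibrium has social welfare at least 1; consequently the price of anarchy of
such a game is at most n. -/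
theorem stmt10 (A V : Type) [Fintype A] [DecidableEq A] [Fintype V] [DecidableEq V]
    (g : SchellingGame A V) (hwf : g.WellFormed)
    (k : ℕ) (hk : 2 ≤ k) (typ : A → Fin k) (ht : g.IsTypedGame k typ)
    (hstrat : g.strategic = Finset.univ)
    (htwo : ∀ c : Fin k, 2 ≤ Nat.card {i // typ i = c})
    (hconn : g.top.Connected) :
    (∀ v, g.IsEquilibrium v → 1 ≤ g.SW v) ∧
    (∀ v w, g.IsEquilibrium v → g.IsAssignment w →
      g.SW w ≤ (Fintype.card A : ℚ) * g.SW v) := by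
  classical
  have main : ∀ v, g.IsEquilibrium v → 1 ≤ g.SW v := by
    intro v hv
    obtain ⟨⟨hinj, -⟩, heq⟩ := hv
    obtain ⟨hn, hlt, -⟩ := hwf
    have ⟨z, hz, j0, hj0⟩ : ∃ z, (∀ j, v j ≠ z) ∧ ∃ j, g.top.Adj z (v j) := by
      have hA : Nonempty A := Fintype.card_pos_iff.mp (by omega)
      obtain ⟨a⟩ := hA
      have hns : ¬ Function.Surjective v := fun hs =>
        absurd (Fintype.card_le_of_surjective v hs) (by omega)
      obtain ⟨y, hy⟩ := not_forall.mp hns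
      obtain ⟨p⟩ := hconn.preconnected (v a) y
      obtain ⟨d, -, ⟨j, hj⟩, hd2⟩ := p.exists_boundary_dart (Set.range v) ⟨a, rfl⟩ hy
      refine ⟨d.snd, fun j h => hd2 ⟨j, h⟩, j, ?_⟩
      rw [hj]
      exact d.adj.symm
    set D := Finset.univ.filter (fun j => g.top.Adj z (v j)) with hD
    have hDpos : 0 < D.card := Finset.card_pos.mpr ⟨j0, by simpa [hD] using hj0⟩
    have hDq : (0 : ℚ) < D.card := by exact_mod_cast hDpos
    have h1 : ∑ i, ((Finset.univ.filter
        (fun j => g.net.Adj i j ∧ g.top.Adj z (v j))).card : ℚ) / D.card ≤ g.SW v := by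
      unfold SchellingGame.SW
      rw [hstrat]
      apply Finset.sum_le_sum
      intro i _
      exact (g.aux_util v i z).trans (heq i (by simp [hstrat]) z hz)
    have h2 : D.card ≤ ∑ i, (Finset.univ.filter
        (fun j => g.net.Adj i j ∧ g.top.Adj z (v j))).card := by
      have hrew : ∀ i, (Finset.univ.filter
          (fun j => g.net.Adj i j ∧ g.top.Adj z (v j))).card
          = ∑ j ∈ D, if g.net.Adj i j then 1 else 0 := by
        intro i
        rw [Finset.sum_boole, hD, Finset.filter_filter]
        simp [and_comm]
      simp_rw [hrew]
      rw [Finset.sum_comm, Finset.card_eq_sum_ones]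
      apply Finset.sum_le_sum
      intro j _
      have hc := htwo (typ j)
      rw [Nat.card_eq_fintype_card] at hc
      obtain ⟨⟨i, hi⟩, hne⟩ := Fintype.exists_ne_of_one_lt_card hc ⟨j, rfl⟩
      have hadj : g.net.Adj i j := (ht.1 i j).mpr ⟨fun h => hne (Subtype.ext h), hi⟩
      have := Finset.single_le_sum (f := fun i => if g.net.Adj i j then 1 else 0)
        (fun _ _ => Nat.zero_le _) (Finset.mem_univ i)
      simpa [hadj] using this
    refine le_trans ?_ h1
    rw [← Finset.sum_div, le_div_iff₀ hDq, one_mul]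
    exact_mod_cast h2
  refine ⟨main, fun v w hv _ => ?_⟩
  have h1 := main v hv
  have h2 : g.SW w ≤ Fintype.card A := by
    unfold SchellingGame.SW
    rw [hstrat]
    calc _ ≤ ∑ i : A, (1 : ℚ) := Finset.sum_le_sum fun i _ => g.util_le_one w i
      _ = _ := by simp
  have h3 : (0 : ℚ) ≤ Fintype.card A := by positivity
  nlinarith
end

section
/- For every k ≥ 2 and every integer ℓ ≥ 2, there exists a k-typed Schelling game with no stubborn agents and exactly k(ℓ+1) agents of each type (hence n = k²(ℓ+1) agents in total), whose topology is connected with n+1 nodes, such that the game admits an assignment with social welfare k²(ℓ+1) (every agent has utility 1) and also admits an equilibrium assignment with social welfare k(ℓ+k); consequently its price of anarchy is at least (kℓ+k)/(ℓ+k), which tends to k as ℓ grows. -/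
namespace SchAux

open SchellingGame

/-- Agents / nonempty nodes: block, position, layer. -/
abbrev Ag (k l : ℕ) := Fin k × Fin k × Fin (l + 1)

def base (k l : ℕ) (x y : Ag k l) : Prop :=
  x.1 = y.1 ∧ ((x.2.2 = 0 ∧ y.2.2 = 0 ∧ x.2.1 ≠ y.2.1) ∨
    (x.2.2 ≠ 0 ∧ y.2.2 ≠ 0 ∧ x.2.2 ≠ y.2.2))

def adj (k l : ℕ) : Option (Ag k l) → Option (Ag k l) → Prop
  | none, none => False
  | none, some _ => True
  | some _, none => True
  | some x, some y => base k l x y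

theorem base_symm {k l : ℕ} {x y : Ag k l} (h : base k l x y) : base k l y x := by
  unfold base at *
  grind

def G (k l : ℕ) : SimpleGraph (Option (Ag k l)) where
  Adj := adj k l
  symm := ⟨by
    rintro (_ | x) (_ | y) h
    · exact h
    · trivial
    · trivial
    · exact base_symm h⟩
  loopless := ⟨by
    rintro (_ | x) h
    · exact h
    · obtain ⟨-, h⟩ := h
      grind⟩

def N (k l : ℕ) : SimpleGraph (Ag k l) where
  Adj i j := i ≠ j ∧ i.1 = j.1
  symm := ⟨by
    rintro i j ⟨h, h'⟩
    exact ⟨h.symm, h'.symm⟩⟩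
  loopless := ⟨by
    rintro i ⟨h, _⟩
    exact h rfl⟩

def game (k l : ℕ) : SchellingGame (Ag k l) (Option (Ag k l)) where
  strategic := Finset.univ
  net := N k l
  top := G k l
  loc := fun _ => none

def sw (k l : ℕ) (i : Ag k l) : Ag k l :=
  if i.2.2 = 0 then i else (i.2.1, i.1, i.2.2)

theorem sw_inj (k l : ℕ) : Function.Injective (sw k l) := by
  rintro ⟨a, b, c⟩ ⟨a', b', c'⟩ h
  unfold sw at h
  grind

theorem util_one {A V : Type} [Fintype A] (g : SchellingGame A V) (v : A → V) (i : A)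
    (h1 : ∃ j, g.net.Adj i j ∧ g.top.Adj (v i) (v j))
    (h2 : ∀ j, j ≠ i → g.top.Adj (v i) (v j) → g.net.Adj i j) : g.util v i = 1 := by
  have hf : g.fcount v i ≠ 0 := by
    unfold fcount
    obtain ⟨j, hj⟩ := h1
    have : Nonempty {j : A // g.net.Adj i j ∧ g.top.Adj (v i) (v j)} := ⟨⟨j, hj⟩⟩
    exact Nat.card_pos.ne'
  have he : g.ecount v i = 0 := by
    unfold ecount
    have : IsEmpty {j : A // j ≠ i ∧ ¬ g.net.Adj i j ∧ g.top.Adj (v i) (v j)} :=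
      ⟨fun j => j.2.2.1 (h2 j.1 j.2.1 j.2.2.2)⟩
    exact Nat.card_of_isEmpty
  unfold util
  rw [if_neg hf, he]
  have : (g.fcount v i : ℚ) ≠ 0 := by exact_mod_cast hf
  field_simp
  simp

open Classical in
theorem card_eq {A : Type} [Fintype A] (p : A → Prop) (s : Finset A)
    (h : ∀ j, p j ↔ j ∈ s) : Nat.card {j : A // p j} = s.card := by
  rw [Nat.card_eq_fintype_card, Fintype.card_subtype]
  congr 1
  ext j
  simp [h]

theorem exists_ne_fin {k : ℕ} (hk : 2 ≤ k) (b : Fin k) : ∃ b', b' ≠ b := by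
  have : Nontrivial (Fin k) := Fin.nontrivial_iff_two_le.2 hk
  exact exists_ne b

theorem exists_ne_fin' {l : ℕ} (hl : 2 ≤ l) (c : Fin (l + 1)) : ∃ c', c' ≠ c ∧ c' ≠ 0 := by
  by_cases h : c = ⟨1, by omega⟩
  · exact ⟨⟨2, by omega⟩, by subst h; simp [Fin.ext_iff], by simp [Fin.ext_iff]⟩
  · exact ⟨⟨1, by omega⟩, fun h' => h h'.symm, by simp [Fin.ext_iff]⟩

theorem util_id {k l : ℕ} (hk : 2 ≤ k) (hl : 2 ≤ l) (i : Ag k l) :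
    (game k l).util some i = 1 := by
  obtain ⟨a, b, c⟩ := i
  apply util_one
  · by_cases hc : c = 0
    · obtain ⟨b', hb⟩ := exists_ne_fin hk b
      refine ⟨(a, b', c), ⟨?_, rfl⟩, rfl, Or.inl ⟨hc, hc, hb.symm⟩⟩
      simp [hb.symm]
    · obtain ⟨c', h1, h2⟩ := exists_ne_fin' hl c
      refine ⟨(a, b, c'), ⟨?_, rfl⟩, rfl, Or.inr ⟨hc, h2, h1.symm⟩⟩
      simp [h1.symm]
  · rintro j hj ⟨h, -⟩
    exact ⟨hj.symm, h⟩

def veq (k l : ℕ) (i : Ag k l) : Option (Ag k l) := some (sw k l i)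

theorem util_veq0 {k l : ℕ} (hk : 2 ≤ k) (a b : Fin k) :
    (game k l).util (veq k l) (a, b, 0) = 1 := by
  apply util_one
  · obtain ⟨b', hb⟩ := exists_ne_fin hk b
    refine ⟨(a, b', 0), ⟨?_, rfl⟩, ?_⟩
    · simp [hb.symm]
    · change base k l _ _
      simp [base, sw, hb.symm]
  · rintro ⟨a', b', c'⟩ hj h
    change base k l _ _ at h
    refine ⟨hj.symm, ?_⟩
    unfold base sw at h
    grind

theorem util_veq1 {k l : ℕ} (hk : 2 ≤ k) (hl : 2 ≤ l) (a b : Fin k) (c : Fin (l + 1))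
    (hc : c ≠ 0) : (game k l).util (veq k l) (a, b, c) = 1 / k := by
  have hcard : ({0, c} : Finset (Fin (l + 1)))ᶜ.card = l - 1 := by
    rw [Finset.card_compl, Finset.card_pair hc.symm, Fintype.card_fin]; omega
  have hf : (game k l).fcount (veq k l) (a, b, c) = l - 1 := by
    unfold fcount
    rw [card_eq _ ({a} ×ˢ {b} ×ˢ ({0, c} : Finset (Fin (l + 1)))ᶜ)]
    · rw [Finset.card_product, Finset.card_product, hcard]
      simp
    · rintro ⟨a', b', c'⟩
      change ((a, b, c) ≠ (a', b', c') ∧ a = a') ∧ base k l _ _ ↔ _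
      simp only [Finset.mem_product, Finset.mem_singleton, Finset.mem_compl, Finset.mem_insert]
      unfold base sw
      grind
  have he : (game k l).ecount (veq k l) (a, b, c) = (k - 1) * (l - 1) := by
    unfold ecount
    rw [card_eq _ (({a} : Finset (Fin k))ᶜ ×ˢ {b} ×ˢ ({0, c} : Finset (Fin (l + 1)))ᶜ)]
    · rw [Finset.card_product, Finset.card_product, hcard, Finset.card_compl]
      simp
    · rintro ⟨a', b', c'⟩
      change _ ∧ ¬ ((a, b, c) ≠ (a', b', c') ∧ a = a') ∧ base k l _ _ ↔ _
      simp only [Finset.mem_product, Finset.mem_singleton, Finset.mem_compl, Finset.mem_insert]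
      unfold base sw
      grind
  unfold util
  rw [hf, he, if_neg (by omega)]
  obtain ⟨m, rfl⟩ : ∃ m, l = m + 2 := ⟨l - 2, by omega⟩
  obtain ⟨q, rfl⟩ : ∃ q, k = q + 2 := ⟨k - 2, by omega⟩
  have h1 : m + 2 - 1 = m + 1 := by omega
  have h2 : q + 2 - 1 = q + 1 := by omega
  rw [h1, h2]
  push_cast
  rw [div_eq_div_iff (by positivity) (by positivity)]
  ring

theorem util_dev {k l : ℕ} (hk : 2 ≤ k) (i : Ag k l) :
    (game k l).util (Function.update (veq k l) i none) i ≤ 1 / k := by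
  have hadj : ∀ j, (G k l).Adj (Function.update (veq k l) i none i)
      (Function.update (veq k l) i none j) ↔ j ≠ i := by
    intro j
    by_cases h : j = i
    · subst h
      simp
    · rw [Function.update_self, Function.update_of_ne h]
      exact ⟨fun _ => h, fun _ => trivial⟩
  have hf : (game k l).fcount (Function.update (veq k l) i none) i = k * (l + 1) - 1 := by
    unfold fcount
    rw [card_eq _ ((({i.1} : Finset (Fin k)) ×ˢ Finset.univ ×ˢ Finset.univ).erase i)]
    · rw [Finset.card_erase_of_mem (by simp)]
      simp [Finset.card_product]
    · intro j
      change (i ≠ j ∧ i.1 = j.1) ∧ (G k l).Adj _ _ ↔ _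
      rw [hadj]
      simp
      grind
  have he : (game k l).ecount (Function.update (veq k l) i none) i
      = (k - 1) * (k * (l + 1)) := by
    unfold ecount
    rw [card_eq _ ((({i.1} : Finset (Fin k))ᶜ ×ˢ Finset.univ ×ˢ Finset.univ))]
    · simp [Finset.card_product, Finset.card_compl]
    · intro j
      change _ ∧ ¬ (i ≠ j ∧ i.1 = j.1) ∧ (G k l).Adj _ _ ↔ _
      rw [hadj]
      simp
      grind
  unfold util
  rw [hf, he]
  split_ifs
  · positivity
  obtain ⟨q, rfl⟩ : ∃ q, k = q + 1 := ⟨k - 1, by omega⟩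
  obtain ⟨m, hm⟩ : ∃ m, (q + 1) * (l + 1) = m + 1 :=
    ⟨(q + 1) * (l + 1) - 1, by have : 0 < (q + 1) * (l + 1) := by positivity
                               omega⟩
  rw [hm]
  simp only [Nat.add_sub_cancel]
  have hq : (1 : ℚ) ≤ q := by exact_mod_cast (by omega : 1 ≤ q)
  have hm0 : (0 : ℚ) ≤ m := by positivity
  push_cast
  rw [div_le_div_iff₀ (by positivity) (by positivity)]
  nlinarith

theorem isEq {k l : ℕ} (hk : 2 ≤ k) (hl : 2 ≤ l) : (game k l).IsEquilibrium (veq k l) := by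
  refine ⟨⟨fun i j h => sw_inj k l (Option.some.inj h), fun i hi => (hi (Finset.mem_univ _)).elim⟩,
    ?_⟩
  intro i _ z hz
  have hz' : z = none := by
    rcases z with _ | x
    · rfl
    · exfalso
      obtain ⟨j, hj⟩ := (Finite.injective_iff_surjective.1 (sw_inj k l)) x
      exact hz j (congrArg some hj)
  subst hz'
  refine (util_dev hk i).trans ?_
  obtain ⟨a, b, c⟩ := i
  by_cases hc : c = 0
  · subst hc
    rw [util_veq0 hk, div_le_one (by positivity)]
    exact_mod_cast (by omega : 1 ≤ k)
  · rw [util_veq1 hk hl a b c hc]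

theorem sw_veq {k l : ℕ} (hk : 2 ≤ k) (hl : 2 ≤ l) :
    (game k l).SW (veq k l) = (k * (l + k) : ℚ) := by
  unfold SW
  change ∑ i : Ag k l, _ = _
  simp only [Fintype.sum_prod_type, Fin.sum_univ_succ, util_veq0 hk,
    util_veq1 hk hl _ _ _ (Fin.succ_ne_zero _)]
  simp
  have : (k : ℚ) ≠ 0 := by exact_mod_cast (by omega : k ≠ 0)
  field_simp
  ring

/-- Transport of a game along bijections. -/
def tr {A V A' V' : Type} [Fintype A'] (e : A' ≃ A) (f : V' ≃ V) (g : SchellingGame A V) :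
    SchellingGame A' V' where
  strategic := Finset.univ
  net := g.net.comap e
  top := g.top.comap f
  loc := fun i => f.symm (g.loc (e i))

theorem tr_util {A V A' V' : Type} [Fintype A'] (e : A' ≃ A) (f : V' ≃ V)
    (g : SchellingGame A V) (v : A → V) (w : A' → V') (h : ∀ i, f (w i) = v (e i)) (i : A') :
    (tr e f g).util w i = g.util v (e i) := by
  have hf : (tr e f g).fcount w i = g.fcount v (e i) := by
    unfold fcount
    refine Nat.card_congr (e.subtypeEquiv fun j => ?_)
    simp [tr, h]
  have he : (tr e f g).ecount w i = g.ecount v (e i) := by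
    unfold ecount
    refine Nat.card_congr (e.subtypeEquiv fun j => ?_)
    simp [tr, h]
  unfold util
  rw [hf, he]

theorem tr_SW {A V A' V' : Type} [Fintype A] [Fintype A'] (e : A' ≃ A) (f : V' ≃ V)
    (g : SchellingGame A V) (hg : g.strategic = Finset.univ) (v : A → V) :
    (tr e f g).SW (fun i => f.symm (v (e i))) = g.SW v := by
  unfold SW
  rw [hg]
  exact Fintype.sum_equiv e _ _ fun i => tr_util e f g v _ (by simp) i

theorem tr_eq {A V A' V' : Type} [Fintype A] [Fintype A'] [DecidableEq A] [DecidableEq A']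
    (e : A' ≃ A) (f : V' ≃ V)
    (g : SchellingGame A V) (hg : g.strategic = Finset.univ) (v : A → V)
    (hv : g.IsEquilibrium v) : (tr e f g).IsEquilibrium (fun i => f.symm (v (e i))) := by
  obtain ⟨⟨h1, -⟩, h2⟩ := hv
  refine ⟨⟨fun i j h => e.injective (h1 (f.symm.injective h)),
    fun i hi => (hi (Finset.mem_univ _)).elim⟩, ?_⟩
  intro i _ z hz
  rw [tr_util e f g v (fun i => f.symm (v (e i))) (fun j => by simp),
    tr_util e f g (Function.update v (e i) (f z))
      (Function.update (fun i => f.symm (v (e i))) i z) ?_]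
  · refine h2 (e i) (by rw [hg]; exact Finset.mem_univ _) (f z) fun j hj => ?_
    apply hz (e.symm j)
    simp [hj]
  · intro j
    by_cases hj : j = i
    · subst hj; simp
    · rw [Function.update_of_ne hj, Function.update_of_ne (by simpa using hj)]
      simp

theorem G_conn (k l : ℕ) : (G k l).Connected := by
  have h : ∀ x, (G k l).Reachable none x := by
    rintro (_ | x)
    · exact SimpleGraph.Reachable.refl _
    · exact SimpleGraph.Adj.reachable (G := G k l) (show adj k l none (some x) from trivial)
  have : Nonempty (Option (Ag k l)) := ⟨none⟩
  exact ⟨fun x y => (h x).symm.trans (h y)⟩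

end SchAux

/-- for all k ≥ 2 and ℓ ≥ 2 there is a k-typed Schelling game with no
stubborn agents, exactly k(ℓ+1) agents per type (n = k²(ℓ+1) agents), connected
topology with n+1 nodes, admitting an assignment of social welfare k²(ℓ+1) in which
every agent has utility 1, and an equilibrium of social welfare k(ℓ+k); hence its
price of anarchy is at least (kℓ+k)/(ℓ+k). -/
theorem stmt11 (k l : ℕ) (hk : 2 ≤ k) (hl : 2 ≤ l) :
    ∃ (g : SchellingGame (Fin (k ^ 2 * (l + 1))) (Fin (k ^ 2 * (l + 1) + 1)))
      (typ : Fin (k ^ 2 * (l + 1)) → Fin k),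
      g.WellFormed ∧ g.IsTypedGame k typ ∧ g.strategic = Finset.univ ∧
      (∀ c : Fin k, Nat.card {i // typ i = c} = k * (l + 1)) ∧
      g.top.Connected ∧
      (∃ v, g.IsAssignment v ∧ (∀ i, g.util v i = 1) ∧ g.SW v = (k ^ 2 * (l + 1) : ℚ)) ∧
      (∃ v, g.IsEquilibrium v ∧ g.SW v = (k * (l + k) : ℚ)) := by
  classical
  have hA : Fintype.card (Fin (k ^ 2 * (l + 1))) = Fintype.card (SchAux.Ag k l) := by
    simp; ring
  have hV : Fintype.card (Fin (k ^ 2 * (l + 1) + 1)) = Fintype.card (Option (SchAux.Ag k l)) := by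
    simp; ring
  let e := Fintype.equivOfCardEq hA
  let f := Fintype.equivOfCardEq hV
  have hpos : 0 < k := by omega
  refine ⟨SchAux.tr e f (SchAux.game k l), fun i => (e i).1, ⟨?_, by simp, ?_⟩, ⟨?_, ?_⟩, rfl,
    ?_, ?_, ⟨fun i => f.symm (some (e i)), ⟨?_, ?_⟩, ?_, ?_⟩,
    ⟨fun i => f.symm (SchAux.veq k l (e i)), ?_, ?_⟩⟩
  · simp only [Fintype.card_fin]
    nlinarith [Nat.mul_le_mul hk hk]
  · intro i hi
    simp [SchAux.tr] at hi
  · intro i j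
    change (e i ≠ e j ∧ (e i).1 = (e j).1) ↔ _
    simp
  · intro c
    exact ⟨e.symm (c, ⟨0, hpos⟩, 0), by simp⟩
  · intro c
    rw [Nat.card_congr (e.subtypeEquiv (q := fun j => j.1 = c) fun j => Iff.rfl),
      SchAux.card_eq _ (({c} : Finset (Fin k)) ×ˢ Finset.univ ×ˢ Finset.univ) (fun j => by
        simp only [Finset.mem_product, Finset.mem_singleton, Finset.mem_univ, and_true])]
    simp [Finset.card_product]
  · exact (SimpleGraph.Iso.connected_iff (SimpleGraph.Iso.comap f (SchAux.G k l))).2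
      (SchAux.G_conn k l)
  · intro i j h
    exact e.injective (Option.some.inj (f.symm.injective h))
  · exact fun i hi => (hi (Finset.mem_univ _)).elim
  · intro i
    rw [SchAux.tr_util e f (SchAux.game k l) some _ (by simp), SchAux.util_id hk hl]
  · rw [SchAux.tr_SW e f (SchAux.game k l) rfl some]
    change ∑ i : SchAux.Ag k l, _ = _
    simp only [SchAux.util_id hk hl]
    simp
    ring
  · exact SchAux.tr_eq e f _ rfl _ (SchAux.isEq hk hl)
  · rw [SchAux.tr_SW e f (SchAux.game k l) rfl (SchAux.veq k l), SchAux.sw_veq hk hl]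
end

section
/- In every k-typed Schelling game with no stubborn agents, n agents with exactly n/k agents of each type, and a connected topology with strictly more nodes than agents, every equilibrium assignment has social welfare at least n/k − 1; consequently, since the maximum social welfare is at most n, the price of anarchy of any such game is at most n/(n/k − 1) = k + o(1). -/
/-- in every k-typed Schelling game with no stubborn agents, exactly n/k
agents of each type, and a connected topology with strictly more nodes than agents,
every equilibrium has social welfare at least n/k - 1 (so the price of anarchy is at
most n/(n/k - 1) = k + o(1)). -/
theorem stmt12 (A V : Type) [Fintype A] [DecidableEq A] [Fintype V] [DecidableEq V]
    (g : SchellingGame A V) (hwf : g.WellFormed)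
    (k : ℕ) (hk : 2 ≤ k) (typ : A → Fin k) (ht : g.IsTypedGame k typ)
    (hstrat : g.strategic = Finset.univ)
    (hbal : ∀ c : Fin k, k * Nat.card {i // typ i = c} = Fintype.card A)
    (hconn : g.top.Connected) :
    ∀ v, g.IsEquilibrium v → (Fintype.card A : ℚ) / k - 1 ≤ g.SW v := by
  classical
  intro v hv
  obtain ⟨hn, hcard, -⟩ := hwf
  obtain ⟨⟨hinj, -⟩, heq⟩ := hv
  obtain ⟨hadj, -⟩ := ht
  -- an empty node next to an occupied one
  have hz : ∃ z : V, (∀ j : A, v j ≠ z) ∧ ∃ j, g.top.Adj z (v j) := by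
    have hns : ¬ Function.Surjective v := fun hs =>
      absurd (Fintype.card_le_of_surjective v hs) (by omega)
    have hA : Nonempty A := Fintype.card_pos_iff.mp (by omega)
    obtain ⟨a⟩ := hA
    simp only [Function.Surjective, not_forall] at hns
    obtain ⟨w, hw⟩ := hns
    obtain ⟨p⟩ := hconn.preconnected (v a) w
    obtain ⟨d, -, h1, h2⟩ := p.exists_boundary_dart (Set.range v) ⟨a, rfl⟩ hw
    obtain ⟨j, hj⟩ := h1
    exact ⟨d.snd, fun i hi => h2 ⟨i, hi⟩, j, by rw [hj]; exact d.adj.symm⟩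
  obtain ⟨z, hz, j0, hj0⟩ := hz
  set D : Finset A := Finset.univ.filter (fun j => g.top.Adj z (v j)) with hD
  have hDpos : 0 < D.card := Finset.card_pos.mpr ⟨j0, by simp [hD, hj0]⟩
  set F : A → Finset A := fun i => D.filter (fun j => i ≠ j ∧ typ i = typ j) with hF
  have hf : ∀ i, g.fcount (Function.update v i z) i = (F i).card := by
    intro i
    unfold SchellingGame.fcount
    rw [Nat.card_eq_fintype_card, Fintype.card_subtype]
    congr 1
    ext j
    by_cases hij : i = j
    · subst hij; simp [hF]
    · simp [hF, hD, hadj, hij, Function.update_of_ne (Ne.symm hij), and_comm]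
  have hfe : ∀ i, g.fcount (Function.update v i z) i + g.ecount (Function.update v i z) i
      ≤ D.card := by
    intro i
    have he : g.ecount (Function.update v i z) i
        = (D.filter (fun j => j ≠ i ∧ ¬ (i ≠ j ∧ typ i = typ j))).card := by
      unfold SchellingGame.ecount
      rw [Nat.card_eq_fintype_card, Fintype.card_subtype]
      congr 1
      ext j
      by_cases hij : i = j
      · subst hij; simp
      · simp [hD, hadj, hij, Function.update_of_ne (Ne.symm hij), and_comm]
        tauto
    rw [hf, he, ← Finset.card_union_of_disjoint]
    · apply Finset.card_le_card
      intro j hj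
      simp only [hF, Finset.mem_union, Finset.mem_filter] at hj
      tauto
    · rw [Finset.disjoint_left]
      intro j hj
      simp only [hF, Finset.mem_filter] at hj ⊢
      tauto
  have hu : ∀ i, ((F i).card : ℚ) / D.card ≤ g.util v i := by
    intro i
    refine le_trans ?_ (heq i (by simp [hstrat]) z hz)
    unfold SchellingGame.util
    have h1 := hfe i
    rw [hf] at h1 ⊢
    split_ifs with h0
    · simp [h0]
    · have : 0 < (F i).card := Nat.pos_of_ne_zero h0
      apply div_le_div_of_nonneg_left
      · positivity
      · positivity
      · exact_mod_cast h1
  have hk0 : (k : ℚ) ≠ 0 := by positivity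
  have hsum : (∑ i, ((F i).card : ℚ)) = D.card * ((Fintype.card A : ℚ) / k - 1) := by
    have h1 : ∑ i, ((F i).card : ℚ)
        = ∑ j ∈ D, ((Finset.univ.filter (fun i => i ≠ j ∧ typ i = typ j)).card : ℚ) := by
      simp only [hF, Finset.card_filter, Nat.cast_sum]
      rw [Finset.sum_comm]
    rw [h1, Finset.sum_congr rfl (g := fun _ => (Fintype.card A : ℚ) / k - 1)]
    · simp only [Finset.sum_const, nsmul_eq_mul]
    · intro j _
      have h2 := hbal (typ j)
      rw [Nat.card_eq_fintype_card, Fintype.card_subtype] at h2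
      have h3 : (Finset.univ.filter (fun i => i ≠ j ∧ typ i = typ j))
          = (Finset.univ.filter (fun i => typ i = typ j)).erase j := by
        ext i; simp
      rw [h3, Finset.cast_card_erase_of_mem (by simp), ← h2]
      push_cast
      field_simp
  have hD0 : (D.card : ℚ) ≠ 0 := by positivity
  calc (Fintype.card A : ℚ) / k - 1 = ∑ i, ((F i).card : ℚ) / D.card := by
        rw [← Finset.sum_div, hsum]; field_simp
    _ ≤ g.SW v := by
        unfold SchellingGame.SW
        rw [hstrat]
        exact Finset.sum_le_sum fun i _ => hu i
end

section
/- For every even k ≥ 2 and every real ε > 0, there exists a k-typed Schelling game in which every type contains the same number of stubborn agents, which admits an equilibrium assignment, and in which there is an assignment v* such that SW(v*) ≥ (3 − ε) · SW(v) for every equilibrium assignment v; consequently the price of stability of such games is at least 3. -/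
/-
Construction.  Agents 0 and 1 are strategic of type 0; agents 2, ..., 6k+1 are stubborn, six of each
type, each sitting on the node with the same number.  The free nodes are the hub 0, the leaf 1 and
two further nodes 6k+2, 6k+3.  The hub is adjacent to the leaf and to all stubborn agents of type 1;
each of the two further nodes is adjacent to one stubborn agent of type 0 and five of type 1.
In every equilibrium both strategic agents sit on the further nodes (welfare 1/3), while
placing them on the hub and the leaf has welfare 8/7.
-/

theorem card_interval {n : ℕ} (p : Fin n → Prop) (a b : ℕ) (hb : b ≤ n)
    (h : ∀ j, p j ↔ a ≤ j.val ∧ j.val < b) : Nat.card {j // p j} = b - a := by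
  have e : {j // p j} ≃ Finset.Ico a b :=
    { toFun := fun x => ⟨x.1.val, Finset.mem_Ico.2 ((h x.1).1 x.2)⟩
      invFun := fun y => ⟨⟨y.1, (Finset.mem_Ico.1 y.2).2.trans_le hb⟩,
        (h _).2 (Finset.mem_Ico.1 y.2)⟩
      left_inv := fun x => rfl
      right_inv := fun y => rfl }
  rw [Nat.card_congr e, Nat.card_eq_fintype_card, Fintype.card_coe, Nat.card_Ico]

/-- Oriented adjacency of the topology. -/
def arc (k a b : ℕ) : Prop :=
  (a = 0 ∧ (b = 1 ∨ (8 ≤ b ∧ b < 14))) ∨ (6 * k + 2 ≤ a ∧ (b = 2 ∨ (8 ≤ b ∧ b < 13)))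

def ty (i : ℕ) : ℕ := (i - 2) / 6

def theGame (k : ℕ) (hk : 2 ≤ k) : SchellingGame (Fin (6 * k + 2)) (Fin (6 * k + 4)) where
  strategic := Finset.univ.filter (fun i => i.val < 2)
  net :=
    { Adj := fun i j => i ≠ j ∧ ty i.val = ty j.val
      symm := ⟨fun i j h => ⟨h.1.symm, h.2.symm⟩⟩
      loopless := ⟨fun i h => h.1 rfl⟩ }
  top :=
    { Adj := fun a b => arc k a.val b.val ∨ arc k b.val a.val
      symm := ⟨fun a b h => h.symm⟩
      loopless := ⟨fun a h => by unfold arc at h; omega⟩ }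
  loc := fun i => ⟨i.val, by omega⟩

section
variable {k : ℕ} {hk : 2 ≤ k} {v : Fin (6 * k + 2) → Fin (6 * k + 4)}

theorem mem_strat (i : Fin (6 * k + 2)) : i ∈ (theGame k hk).strategic ↔ i.val < 2 := by
  simp [theGame]

theorem asg_iff : (theGame k hk).IsAssignment v ↔
    Function.Injective v ∧ ∀ i, 2 ≤ i.val → (v i).val = i.val := by
  simp [SchellingGame.IsAssignment, theGame, Fin.ext_iff, Nat.succ_le_iff]

theorem strat_node (hv : (theGame k hk).IsAssignment v) (i : Fin (6 * k + 2)) (hi : i.val < 2) :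
    (v i).val < 2 ∨ 6 * k + 2 ≤ (v i).val := by
  rw [asg_iff] at hv
  by_contra hc
  push Not at hc
  have h1 := hv.2 ⟨(v i).val, hc.2⟩ hc.1
  have h2 := hv.1 (Fin.ext h1)
  have h3 := congrArg Fin.val h2
  simp at h3
  omega

theorem asg_update (hv : (theGame k hk).IsAssignment v) (i : Fin (6 * k + 2)) (hi : i.val < 2)
    (z : Fin (6 * k + 4)) (hz : ∀ j, v j ≠ z) :
    (theGame k hk).IsAssignment (Function.update v i z) := by
  rw [asg_iff] at hv ⊢
  refine ⟨?_, fun j hj => ?_⟩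
  · intro a b hab
    by_cases ha : a = i <;> by_cases hb : b = i
    · rw [ha, hb]
    · subst ha; rw [Function.update_self, Function.update_of_ne hb] at hab
      exact absurd hab.symm (hz b)
    · subst hb; rw [Function.update_self, Function.update_of_ne ha] at hab
      exact absurd hab (hz a)
    · rw [Function.update_of_ne ha, Function.update_of_ne hb] at hab
      exact hv.1 hab
  · rw [Function.update_of_ne (by rintro rfl; omega)]
    exact hv.2 j hj

theorem util_q (hv : (theGame k hk).IsAssignment v) (i : Fin (6 * k + 2)) (hi : i.val < 2)
    (hq : 6 * k + 2 ≤ (v i).val) : (theGame k hk).util v i = 1 / 6 := by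
  have hs := strat_node hv
  have hv' := asg_iff.1 hv
  have hf : (theGame k hk).fcount v i = 1 := by
    refine card_interval _ 2 3 (by omega) fun j => ?_
    have h1 := hs j
    have h2 := hv'.2 j
    simp only [theGame, arc, ty, ne_eq, Fin.ext_iff]
    omega
  have he : (theGame k hk).ecount v i = 5 := by
    refine card_interval _ 8 13 (by omega) fun j => ?_
    have h1 := hs j
    have h2 := hv'.2 j
    simp only [theGame, arc, ty, ne_eq, Fin.ext_iff]
    omega
  simp [SchellingGame.util, hf, he]
  norm_num

theorem util_c (hv : (theGame k hk).IsAssignment v) (i : Fin (6 * k + 2)) (hi : i.val < 2)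
    (hq : (v i).val = 0) : (theGame k hk).util v i ≤ 1 / 7 := by
  have hs := strat_node hv
  have hv' := asg_iff.1 hv
  have hf : (theGame k hk).fcount v i ≤ 1 := by
    refine (Nat.card_le_card_of_injective
      (fun x => (⟨x.1, ?_⟩ : {j : Fin (6 * k + 2) // 1 - i.val ≤ j.val ∧ j.val < 2 - i.val})) ?_).trans
      (card_interval _ (1 - i.val) (2 - i.val) (by omega) fun j => Iff.rfl).le |>.trans (by omega)
    · obtain ⟨j, hj⟩ := x
      have h1 := hs j
      have h2 := hv'.2 j
      simp only [theGame, arc, ty, ne_eq, Fin.ext_iff] at hj ⊢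
      omega
    · intro a b h
      simpa [Subtype.ext_iff] using h
  have he : (theGame k hk).ecount v i = 6 := by
    refine card_interval _ 8 14 (by omega) fun j => ?_
    have h1 := hs j
    have h2 := hv'.2 j
    simp only [theGame, arc, ty, ne_eq, Fin.ext_iff]
    omega
  unfold SchellingGame.util
  rw [he]
  interval_cases (theGame k hk).fcount v i <;> norm_num

theorem util_l (hv : (theGame k hk).IsAssignment v) (i : Fin (6 * k + 2)) (hi : i.val < 2)
    (hq : (v i).val = 1) (hn : ∀ j, (v j).val ≠ 0) : (theGame k hk).util v i = 0 := by
  have hf : (theGame k hk).fcount v i = 0 := by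
    refine card_interval _ 0 0 (by omega) fun j => ?_
    have h1 := hn j
    simp only [theGame, arc, ty, ne_eq, Fin.ext_iff]
    omega
  simp [SchellingGame.util, hf]

theorem util_l' (hv : (theGame k hk).IsAssignment v) (h0 : (v 0).val = 0) (h1 : (v 1).val = 1) :
    (theGame k hk).util v 1 = 1 := by
  have hv' := asg_iff.1 hv
  have e1 : ((1 : Fin (6 * k + 2))).val = 1 := by simp [Nat.mod_eq_of_lt]
  have hf : (theGame k hk).fcount v 1 = 1 := by
    refine card_interval _ 0 1 (by omega) fun j => ?_
    have h2 := hv'.2 j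
    have h3 : j.val = 0 → j = 0 := fun h => Fin.ext h
    have h4 : j.val = 0 → (v j).val = 0 := fun h => by rw [h3 h]; exact h0
    have h5 : j.val = 1 → (v j).val = 1 := fun h => by
      rw [show j = 1 from Fin.ext (h.trans e1.symm)]; exact h1
    simp only [theGame, arc, ty, ne_eq, Fin.ext_iff]
    omega
  have he : (theGame k hk).ecount v 1 = 0 := by
    refine card_interval _ 0 0 (by omega) fun j => ?_
    have h2 := hv'.2 j
    have h4 : j.val = 0 → (v j).val = 0 := fun h => by rw [show j = 0 from Fin.ext h]; exact h0
    have h5 : j.val = 1 → (v j).val = 1 := fun h => by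
      rw [show j = 1 from Fin.ext (h.trans e1.symm)]; exact h1
    simp only [theGame, arc, ty, ne_eq, Fin.ext_iff]
    omega
  simp [SchellingGame.util, hf, he]

theorem util_nonneg (i) : 0 ≤ (theGame k hk).util v i := by
  unfold SchellingGame.util
  split_ifs <;> positivity

theorem sw_eq : (theGame k hk).SW v = (theGame k hk).util v 0 + (theGame k hk).util v 1 := by
  have e1 : ((1 : Fin (6 * k + 2))).val = 1 := by simp [Nat.mod_eq_of_lt]
  have hs : (theGame k hk).strategic = {0, 1} := by
    ext i
    rw [mem_strat]
    simp only [Finset.mem_insert, Finset.mem_singleton, Fin.ext_iff, e1, Fin.val_zero]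
    omega
  rw [SchellingGame.SW, hs, Finset.sum_pair]
  simp [Fin.ext_iff, e1]

/-- In an equilibrium both strategic agents sit on the further nodes. -/
theorem eq_node (hv : (theGame k hk).IsEquilibrium v) (i : Fin (6 * k + 2)) (hi : i.val < 2) :
    (theGame k hk).util v i = 1 / 6 := by
  obtain ⟨ha, hd⟩ := hv
  have hv' := asg_iff.1 ha
  -- an agent not on a further node has utility at least 1/6
  have key : ∀ j : Fin (6 * k + 2), j.val < 2 → (v j).val < 2 →
      1 / 6 ≤ (theGame k hk).util v j := by
    intro j hj hvj
    have : ∃ z : Fin (6 * k + 4), 6 * k + 2 ≤ z.val ∧ ∀ t, v t ≠ z := by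
      by_contra hc
      push Not at hc
      obtain ⟨a, ha1⟩ := hc ⟨6 * k + 2, by omega⟩ le_rfl
      obtain ⟨b, hb1⟩ := hc ⟨6 * k + 3, by omega⟩ (by simp)
      have ha2 := congrArg Fin.val ha1
      have hb2 := congrArg Fin.val hb1
      simp only at ha2 hb2
      have a3 := hv'.2 a
      have b3 := hv'.2 b
      have : a ≠ b := by rintro rfl; omega
      have : a ≠ j := by rintro rfl; omega
      have : b ≠ j := by rintro rfl; omega
      simp only [ne_eq, Fin.ext_iff] at *
      omega
    obtain ⟨z, hz, hz'⟩ := this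
    have h := hd j ((mem_strat j).2 hj) z hz'
    rwa [util_q (asg_update ha j hj z hz') j hj (by simpa using hz)] at h
  have noc : ∀ j, (v j).val ≠ 0 := by
    intro j hj
    have hj2 : j.val < 2 := by
      by_contra hc
      have := hv'.2 j (by omega)
      omega
    have h1 := key j hj2 (by omega)
    have h2 := util_c ha j hj2 hj
    norm_num at h1 h2
    linarith
  rcases strat_node ha i hi with h | h
  · have h1 := key i hi h
    have h2 := util_l ha i hi (by have := noc i; omega) noc
    rw [h2] at h1
    norm_num at h1
  · exact util_q ha i hi h

end

/-- The full result, including positivity of the welfare of equilibria. -/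
theorem strong (k : ℕ) (hk : 2 ≤ k) :
    ∃ (nA nV : ℕ) (g : SchellingGame (Fin nA) (Fin nV)) (typ : Fin nA → Fin k),
      g.WellFormed ∧ g.IsTypedGame k typ ∧
      (∀ c c' : Fin k, Nat.card {i // typ i = c ∧ i ∉ g.strategic} =
        Nat.card {i // typ i = c' ∧ i ∉ g.strategic}) ∧
      (∃ v, g.IsEquilibrium v) ∧
      (∃ w, g.IsAssignment w ∧ ∀ v, g.IsEquilibrium v → 0 < g.SW v ∧ 3 * g.SW v ≤ g.SW w) := by
  refine ⟨6 * k + 2, 6 * k + 4, theGame k hk, fun i => ⟨ty i.val, by unfold ty; omega⟩,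
    ⟨?_, ?_, ?_⟩, ⟨?_, ?_⟩, ?_, ?_, ?_⟩
  · simp
  · simp
  · intro a _ b _ h
    simpa [theGame, Fin.ext_iff] using h
  · intro i j
    simp [theGame]
  · intro c
    exact ⟨⟨6 * c.val + 2, by omega⟩, Fin.ext (by simp [ty])⟩
  · have : ∀ c : Fin k, Nat.card {i : Fin (6 * k + 2) // (⟨ty i.val, by unfold ty; omega⟩ : Fin k) = c ∧
        i ∉ (theGame k hk).strategic} = 6 := by
      intro c
      rw [card_interval _ (6 * c.val + 2) (6 * c.val + 8) (by omega)]
      · omega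
      · intro j
        rw [mem_strat, Fin.ext_iff]
        simp only [ty]
        omega
    intro c c'
    rw [this, this]
  · have ha : (theGame k hk).IsAssignment
        (fun i => if i.val < 2 then ⟨6 * k + 2 + i.val % 2, by omega⟩ else ⟨i.val, by omega⟩) := by
      rw [asg_iff]
      refine ⟨fun a b h => ?_, fun i hi => by rw [if_neg (by omega)]⟩
      simp only at h
      split_ifs at h <;> simp only [Fin.ext_iff] at h ⊢ <;> omega
    refine ⟨_, ha, ?_⟩
    intro i hi z hz
    rw [mem_strat] at hi
    rw [util_q ha i hi (by rw [if_pos hi]; simp)]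
    have hu := asg_update ha i hi z hz
    have hz2 := strat_node hu i hi
    rw [Function.update_self] at hz2
    rcases hz2 with h | h
    · have : z.val = 0 ∨ z.val = 1 := by omega
      rcases this with h | h
      · refine (util_c hu i hi (by rw [Function.update_self]; exact h)).trans (by norm_num)
      · rw [util_l hu i hi (by rw [Function.update_self]; exact h)]
        · norm_num
        · intro j
          by_cases hj : j = i
          · subst hj; rw [Function.update_self]; omega
          · rw [Function.update_of_ne hj]
            split_ifs <;> simp only <;> omega
    · exact (util_q hu i hi (by rw [Function.update_self]; exact h)).le
  · have e1 : ((1 : Fin (6 * k + 2))).val = 1 := by simp [Nat.mod_eq_of_lt]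
    have ha : (theGame k hk).IsAssignment (fun i => ⟨i.val, by omega⟩) := by
      rw [asg_iff]
      exact ⟨fun a b h => by simpa [Fin.ext_iff] using h, fun i _ => rfl⟩
    refine ⟨_, ha, fun v hv => ?_⟩
    rw [sw_eq, sw_eq, eq_node hv 0 (by simp), eq_node hv 1 (by omega),
      util_l' ha (by simp) (by simpa using e1)]
    refine ⟨by norm_num, ?_⟩
    have := @util_nonneg k hk (fun i => ⟨i.val, by omega⟩) 0
    norm_num at this ⊢
    linarith

/-- for every even k ≥ 2 and every ε > 0 there is a k-typed Schelling
game in which every type has the same number of stubborn agents, admitting an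
equilibrium, together with an assignment v* whose social welfare is at least (3 - ε)
times the social welfare of every equilibrium; hence the price of stability of such
games is at least 3. -/
theorem stmt16 (k : ℕ) (hk : 2 ≤ k) (hkEven : Even k) (eps : ℚ) (heps : 0 < eps) :
    ∃ (nA nV : ℕ) (g : SchellingGame (Fin nA) (Fin nV)) (typ : Fin nA → Fin k),
      g.WellFormed ∧ g.IsTypedGame k typ ∧
      (∀ c c' : Fin k, Nat.card {i // typ i = c ∧ i ∉ g.strategic} =
        Nat.card {i // typ i = c' ∧ i ∉ g.strategic}) ∧
      (∃ v, g.IsEquilibrium v) ∧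
      (∃ w, g.IsAssignment w ∧ ∀ v, g.IsEquilibrium v → (3 - eps) * g.SW v ≤ g.SW w) := by
  obtain ⟨nA, nV, g, typ, h1, h2, h3, h4, w, hw, h5⟩ := strong k hk
  refine ⟨nA, nV, g, typ, h1, h2, h3, h4, w, hw, fun v hv => ?_⟩
  obtain ⟨hpos, h6⟩ := h5 v hv
  nlinarith [mul_pos heps hpos]
end

section
/- In the linear-utility variant of a social Schelling game (utility of agent i under assignment v equal to α·f_i(v) − β·e_i(v) for fixed α, β ≥ 0) in which all agents are strategic (no stubborn agents), every assignment that maximizes the social welfare over all assignments is an equilibrium; consequently the price of stability of such games is 1. -/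
namespace SchellingGame

variable {A V : Type} [Fintype A] [DecidableEq A] [Fintype V] [DecidableEq V]

/-- Linear-utility variant: the utility of agent `i` is `α·f_i(v) − β·e_i(v)`. -/
noncomputable def linUtil (g : SchellingGame A V) (a b : ℝ) (v : A → V) (i : A) : ℝ :=
  a * (g.fcount v i : ℝ) - b * (g.ecount v i : ℝ)

/-- The potential `Φ(v) = Σ_{i ∈ N} (α·f_i(v) − β·e_i(v))`. -/
noncomputable def linPotential (g : SchellingGame A V) (a b : ℝ) (v : A → V) : ℝ :=
  ∑ i : A, g.linUtil a b v i

/-- Equilibrium for the linear-utility variant: no strategic agent can strictly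
increase her (linear) utility by relocating to an unoccupied node. -/
def LinIsEquilibrium (g : SchellingGame A V) (a b : ℝ) (v : A → V) : Prop :=
  g.IsAssignment v ∧ ∀ i ∈ g.strategic, ∀ z : V, (∀ j : A, v j ≠ z) →
    g.linUtil a b (Function.update v i z) i ≤ g.linUtil a b v i

/-- Social welfare in the linear-utility variant. -/
noncomputable def linSW (g : SchellingGame A V) (a b : ℝ) (v : A → V) : ℝ :=
  ∑ i ∈ g.strategic, g.linUtil a b v i

end SchellingGame

namespace SchellingGame

variable {A V : Type} [Fintype A] [DecidableEq A] [Fintype V] [DecidableEq V]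

open Classical in
/-- Pairwise contribution. -/
noncomputable def pairC (g : SchellingGame A V) (a b : ℝ) (v : A → V) (i j : A) : ℝ :=
  if g.top.Adj (v i) (v j) then (if g.net.Adj i j then a else -b) else 0

theorem linUtil_eq (g : SchellingGame A V) (a b : ℝ) (v : A → V) (i : A) :
    g.linUtil a b v i = ∑ j, g.pairC a b v i j := by
  classical
  unfold linUtil fcount ecount
  rw [Nat.card_eq_fintype_card, Nat.card_eq_fintype_card, Fintype.card_subtype,
    Fintype.card_subtype, Finset.card_filter, Finset.card_filter]
  push_cast
  rw [Finset.mul_sum, Finset.mul_sum, ← Finset.sum_sub_distrib]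
  refine Finset.sum_congr rfl fun j _ => ?_
  unfold pairC
  by_cases hij : j = i
  · subst hij; simp
  · by_cases h1 : g.top.Adj (v i) (v j) <;> by_cases h2 : g.net.Adj i j <;> simp [h1, h2, hij]

theorem pairC_symm (g : SchellingGame A V) (a b : ℝ) (v : A → V) (i j : A) :
    g.pairC a b v i j = g.pairC a b v j i := by
  unfold pairC
  have h1 := g.top.adj_comm (v i) (v j)
  have h2 := g.net.adj_comm i j
  split_ifs <;> tauto

theorem pairC_self (g : SchellingGame A V) (a b : ℝ) (v : A → V) (i : A) :
    g.pairC a b v i i = 0 := by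
  simp [pairC]

theorem linSum_eq (g : SchellingGame A V) (a b : ℝ) (v : A → V) (i : A) :
    ∑ k, g.linUtil a b v k = 2 * g.linUtil a b v i
      + ∑ k ∈ Finset.univ.erase i, ∑ j ∈ Finset.univ.erase i, g.pairC a b v k j := by
  have h1 : ∀ k, g.linUtil a b v k
      = g.pairC a b v i k + ∑ j ∈ Finset.univ.erase i, g.pairC a b v k j := fun k => by
    rw [linUtil_eq, ← Finset.add_sum_erase _ _ (Finset.mem_univ i), pairC_symm g a b v k i]
  rw [← Finset.add_sum_erase _ _ (Finset.mem_univ i), Finset.sum_congr rfl fun k _ => h1 k,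
    Finset.sum_add_distrib]
  have h2 := h1 i
  rw [pairC_self, zero_add] at h2
  rw [← h2]
  ring

theorem max_isEq (g : SchellingGame A V) (hstrat : g.strategic = Finset.univ) (a b : ℝ)
    (v : A → V) (hv : g.IsAssignment v)
    (hmax : ∀ w, g.IsAssignment w → g.linSW a b w ≤ g.linSW a b v) :
    g.LinIsEquilibrium a b v := by
  refine ⟨hv, fun i _ z hz => ?_⟩
  have hw : g.IsAssignment (Function.update v i z) := by
    refine ⟨?_, fun k hk => absurd (by simp [hstrat]) hk⟩
    intro x y hxy
    by_cases hx : x = i <;> by_cases hy : y = i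
    · rw [hx, hy]
    · subst hx
      simp only [Function.update_self, Function.update_of_ne hy] at hxy
      exact absurd hxy.symm (hz y)
    · subst hy
      simp only [Function.update_self, Function.update_of_ne hx] at hxy
      exact absurd hxy (hz x)
    · simp only [Function.update_of_ne hy, Function.update_of_ne hx] at hxy
      exact hv.1 hxy
  have h := hmax _ hw
  unfold linSW at h
  rw [hstrat, linSum_eq g a b _ i, linSum_eq g a b v i] at h
  have hc : ∑ k ∈ Finset.univ.erase i, ∑ j ∈ Finset.univ.erase i,
        g.pairC a b (Function.update v i z) k j
      = ∑ k ∈ Finset.univ.erase i, ∑ j ∈ Finset.univ.erase i, g.pairC a b v k j := by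
    refine Finset.sum_congr rfl fun k hk => Finset.sum_congr rfl fun j hj => ?_
    unfold pairC
    rw [Function.update_of_ne (Finset.ne_of_mem_erase hk),
      Function.update_of_ne (Finset.ne_of_mem_erase hj)]
  linarith

end SchellingGame

/-- in the linear-utility variant with all agents strategic, every
assignment maximizing the social welfare is an equilibrium; consequently the price of
stability is 1 (there is an equilibrium with maximum social welfare). -/
theorem stmt19 (A V : Type) [Fintype A] [DecidableEq A] [Fintype V] [DecidableEq V]
    (g : SchellingGame A V) (hwf : g.WellFormed) (hstrat : g.strategic = Finset.univ)
    (a b : ℝ) (ha : 0 ≤ a) (hb : 0 ≤ b) :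
    (∀ v, g.IsAssignment v → (∀ w, g.IsAssignment w → g.linSW a b w ≤ g.linSW a b v) →
      g.LinIsEquilibrium a b v) ∧
    (∃ v, g.LinIsEquilibrium a b v ∧ ∀ w, g.IsAssignment w → g.linSW a b w ≤ g.linSW a b v) := by
  refine ⟨fun v hv hmax => g.max_isEq hstrat a b v hv hmax, ?_⟩
  obtain ⟨e⟩ := Function.Embedding.nonempty_of_card_le hwf.2.1.le
  have he : g.IsAssignment e := ⟨e.injective, fun k hk => absurd (by simp [hstrat]) hk⟩
  obtain ⟨v, hv, hmax⟩ := Set.exists_max_image {v | g.IsAssignment v} (g.linSW a b)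
    (Set.toFinite _) ⟨e, he⟩
  exact ⟨v, g.max_isEq hstrat a b v hv hmax, hmax⟩
end
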